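/- The integral group homology of Γ is: H₀(Γ; Z) ≅ Z, H₁(Γ; Z) ≅ ker(𝒟), H₂(Γ; Z) ≅ Z^q, H_j(Γ; Z) ≅ (Z/N)³ for every odd j ≥ 3, and H_j(Γ; Z) = 0 for every even j ≥ 4, where 𝒟 : (Z/N)³ → (Z/N)^q is the linear map 𝒟(x₁, x₂, x₃) = (δ₁(j)x₁ + δ₂(j)x₂ + δ₃(j)x₃)_{j=1,…,q}. -/

import Mathlib

namespace Stmt6

open Finsupp in
/-- The `n`-th differential of the (inhomogeneous) bar complex computing the homology of the
group `G` with trivial coefficients in the commutative ring `R`.  The module of `n`-chains is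
the free `R`-module on `n`-tuples of elements of `G`, and on a basis element
`(g₁, …, g_{n+1})` the differential is
`(g₂,…,g_{n+1}) + ∑ᵢ (-1)ⁱ (g₁,…,gᵢgᵢ₊₁,…,g_{n+1}) + (-1)^{n+1} (g₁,…,g_n)`. -/
noncomputable def barDiff (R : Type) [CommRing R] (G : Type*) [Group G] (n : ℕ) :
    ((Fin (n + 1) → G) →₀ R) →ₗ[R] ((Fin n → G) →₀ R) :=
  Finsupp.lift ((Fin n → G) →₀ R) R (Fin (n + 1) → G) fun c =>
    Finsupp.single (fun j : Fin n => c j.succ) (1 : R)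
      + ∑ i : Fin n, Finsupp.single
          (fun j : Fin n => if (j : ℕ) < (i : ℕ) then c (Fin.castSucc j)
            else if (j : ℕ) = (i : ℕ) then c (Fin.castSucc i) * c i.succ
            else c j.succ) ((-1 : R) ^ ((i : ℕ) + 1))
      + Finsupp.single (fun j : Fin n => c (Fin.castSucc j)) ((-1 : R) ^ (n + 1))

/-- The submodule of `k`-cycles of the bar complex of `G` (with trivial coefficients `R`). -/
noncomputable def barCycles (R : Type) [CommRing R] (G : Type*) [Group G] :
    (k : ℕ) → Submodule R ((Fin k → G) →₀ R)
  | 0 => ⊤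
  | (k + 1) => LinearMap.ker (barDiff R G k)

/-- The submodule of `k`-boundaries of the bar complex of `G`. -/
noncomputable def barBoundaries (R : Type) [CommRing R] (G : Type*) [Group G] (k : ℕ) :
    Submodule R ((Fin k → G) →₀ R) :=
  LinearMap.range (barDiff R G k)

/-- Group homology `H_k(G; R)` with trivial coefficients, defined via the bar complex as the
image of the `k`-cycles in the quotient of the `k`-chains by the `k`-boundaries
(i.e. as `Z_k / B_k`). -/
noncomputable def barHomology (R : Type) [CommRing R] (G : Type*) [Group G] (k : ℕ) :=
  ↥(Submodule.map (barBoundaries R G k).mkQ (barCycles R G k))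

noncomputable instance (R : Type) [CommRing R] (G : Type*) [Group G] (k : ℕ) :
    AddCommGroup (barHomology R G k) :=
  inferInstanceAs (AddCommGroup ↥(Submodule.map (barBoundaries R G k).mkQ (barCycles R G k)))

noncomputable instance (R : Type) [CommRing R] (G : Type*) [Group G] (k : ℕ) :
    Module R (barHomology R G k) :=
  inferInstanceAs (Module R ↥(Submodule.map (barBoundaries R G k).mkQ (barCycles R G k)))

/-- The relators of the presentation
`Γ = ⟨σ₁, σ₂, σ₃ ∣ σᵢ^N = 1 (i = 1,2,3), σ₁^{δ₁(j)} σ₂^{δ₂(j)} σ₃^{δ₃(j)} = 1 (0 ≤ j ≤ q)⟩`,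
where `N = q² + q + 1` and `δ i : Fin (q+1) → ZMod N` are the three ordered difference sets
(exponentiation by `δ ∈ ZMod N` means exponentiation by the representative `δ.val`).
The generators `σ₁, σ₂, σ₃` correspond to `0, 1, 2 : Fin 3`. -/
def singerRels (q : ℕ) (δ : Fin 3 → Fin (q + 1) → ZMod (q ^ 2 + q + 1)) :
    Set (FreeGroup (Fin 3)) :=
  {r | (∃ i : Fin 3, r = FreeGroup.of i ^ (q ^ 2 + q + 1)) ∨
    (∃ j : Fin (q + 1),
      r = FreeGroup.of 0 ^ (δ 0 j).val * FreeGroup.of 1 ^ (δ 1 j).val *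
        FreeGroup.of 2 ^ (δ 2 j).val)}

/-- The panel-regular `Ã₂`-lattice
`Γ = ⟨σ₁, σ₂, σ₃ ∣ σᵢ^N = 1, σ₁^{δ₁(j)} σ₂^{δ₂(j)} σ₃^{δ₃(j)} = 1 for all j⟩`. -/
def SingerLattice (q : ℕ) (δ : Fin 3 → Fin (q + 1) → ZMod (q ^ 2 + q + 1)) :=
  PresentedGroup (singerRels q δ)

instance (q : ℕ) (δ : Fin 3 → Fin (q + 1) → ZMod (q ^ 2 + q + 1)) :
    Group (SingerLattice q δ) := by
  unfold SingerLattice; infer_instance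

/-- The linear map `𝒟 : (ZMod N)³ → (ZMod N)^q` given by
`𝒟(x₁, x₂, x₃) = (δ₁(j)x₁ + δ₂(j)x₂ + δ₃(j)x₃)_{j = 1, …, q}`. -/
noncomputable def diffMap (q : ℕ) (δ : Fin 3 → Fin (q + 1) → ZMod (q ^ 2 + q + 1)) :
    (Fin 3 → ZMod (q ^ 2 + q + 1)) →ₗ[ZMod (q ^ 2 + q + 1)] (Fin q → ZMod (q ^ 2 + q + 1)) :=
  Matrix.mulVecLin (Matrix.of fun (j : Fin q) (i : Fin 3) => δ i j.succ)

/-- `Δ ⊆ ZMod N` is a planar difference set of order `q` if it has `q + 1` elements and every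
nonzero element of `ZMod N` is uniquely a difference of two elements of `Δ`. -/
def IsPlanarDifferenceSet (q : ℕ) (Δ : Set (ZMod (q ^ 2 + q + 1))) : Prop :=
  Δ.ncard = q + 1 ∧ ∀ x : ZMod (q ^ 2 + q + 1), x ≠ 0 →
    ∃! de : ZMod (q ^ 2 + q + 1) × ZMod (q ^ 2 + q + 1),
      (de.1 ∈ Δ ∧ de.2 ∈ Δ) ∧ de.1 - de.2 = x

/-!
`Γ` acts on the complex whose vertices of type `k ∈ ℤ/3` are the cosets of `⟨σ_k⟩`, whose edges of
type `k` are the elements of `Γ`, the edge `g` running from its coset of type `k` to its coset of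
type `k + 1`, and whose triangles come from the relations of length three. Edges and triangles
have trivial stabilizers, so gluing in the periodic resolutions of the cyclic vertex stabilizers
turns the cellular chain complex into a free resolution of the trivial module, provided that the
cellular chain complex is exact.

Exactness in low degrees expresses that `Γ` is given by its presentation: a cocycle with values in
a module `M` is a derivation of `Γ`, that is, a splitting of `M ⋊ Γ`, and such a splitting can be
defined on the generators. That there are no cycles of triangles is a geometric fact. A horofunction
descends by two along exactly one of the edges leaving a vertex and climbs by one along the others.
Every triangle then has exactly one descending edge, and at most one of the triangles on an edge
has its next edge descending. Hence a nonzero finite cycle of triangles could be climbed forever.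
The horofunction comes from an action of `Γ` on rays, encoded as words, in which the difference set
property says which rays are straight. The same action shows that `σ_k` has order `N`.

In the coinvariants of this resolution the homology is visible: the periodic parts contribute
`(ℤ/N)³` in odd degrees and nothing in even degrees, the two-cycles have rank `q`, and the first
homology is the cokernel of the transpose of `𝒟`. Finite `ℤ/N`-modules are isomorphic to their
duals, so this cokernel is isomorphic to the kernel of `𝒟`.
-/

section SequenceHomology

open CategoryTheory

/-- The image of a submodule `Z` in `M ⧸ B`, identified with any quotient of `Z` by `Z ∩ B`. -/
noncomputable def mapMkQEquivOfSurjective {R M A : Type*} [CommRing R] [AddCommGroup M]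
    [Module R M] [AddCommGroup A] [Module R A] (B Z : Submodule R M) (φ : Z →ₗ[R] A)
    (hφ : Function.Surjective φ) (hker : ∀ z : Z, φ z = 0 ↔ (z : M) ∈ B) :
    Z.map B.mkQ ≃ₗ[R] A :=
  have hkers : LinearMap.ker (B.mkQ.submoduleMap Z) = LinearMap.ker φ := by
    ext z
    rw [LinearMap.mem_ker, LinearMap.mem_ker, hker, ← Subtype.coe_inj,
      LinearMap.submoduleMap_coe_apply, Submodule.coe_zero, Submodule.mkQ_apply,
      Submodule.Quotient.mk_eq_zero]
  ((B.mkQ.submoduleMap Z).quotKerEquivOfSurjective (B.mkQ.submoduleMap_surjective Z)).symm ≪≫ₗ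
    Submodule.quotEquivOfEq _ _ hkers ≪≫ₗ φ.quotKerEquivOfSurjective hφ

variable {R : Type} [CommRing R] {M : ℕ → Type} [∀ n, AddCommGroup (M n)] [∀ n, Module R (M n)]

/-- The `k`-cycles of a sequence of differentials `⋯ → M 1 → M 0`. -/
def seqCycles (d : ∀ n, M (n + 1) →ₗ[R] M n) : (k : ℕ) → Submodule R (M k)
  | 0 => ⊤
  | k + 1 => LinearMap.ker (d k)

/-- The `k`-th homology of a sequence of differentials, in the same form as `barHomology`: the
image of the cycles in the quotient by the boundaries. -/
abbrev SeqHomology (d : ∀ n, M (n + 1) →ₗ[R] M n) (k : ℕ) : Type :=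
  (seqCycles d k).map (LinearMap.range (d k)).mkQ

/-- The homology of a short complex of modules, computed in a module `N` isomorphic to its middle
term. -/
noncomputable def shortComplexHomologyEquiv {N : Type} [AddCommGroup N] [Module R N]
    (S : ShortComplex (ModuleCat R)) (e : S.X₂ ≃ₗ[R] N) (B Z : Submodule R N)
    (hB : ∀ x, e x ∈ B ↔ ∃ y, S.f.hom y = x) (hZ : ∀ x, e x ∈ Z ↔ S.g.hom x = 0) :
    S.homology ≃ₗ[R] Z.map B.mkQ :=
  let cyclesEquiv : LinearMap.ker S.g.hom ≃ₗ[R] Z :=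
    LinearEquiv.ofEq _ (Z.comap e.toLinearMap) (Submodule.ext fun x => (hZ x).symm) ≪≫ₗ
      e.ofSubmodule' Z
  S.moduleCatHomologyIso.toLinearEquiv ≪≫ₗ (mapMkQEquivOfSurjective B Z
    ((LinearMap.range S.moduleCatToCycles).mkQ ∘ₗ cyclesEquiv.symm.toLinearMap)
    ((Submodule.mkQ_surjective _).comp cyclesEquiv.symm.surjective) (fun z => by
      obtain ⟨x, rfl⟩ := cyclesEquiv.surjective z
      rw [LinearMap.comp_apply, LinearEquiv.coe_coe, cyclesEquiv.symm_apply_apply,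
        Submodule.mkQ_apply, Submodule.Quotient.mk_eq_zero]
      exact (exists_congr fun y => Subtype.ext_iff).trans (hB x).symm)).symm

/-- A chain complex of modules isomorphic to a sequence of differentials `d` has its homology. -/
noncomputable def chainComplexHomologyEquiv (K : ChainComplex (ModuleCat R) ℕ)
    (d : ∀ n, M (n + 1) →ₗ[R] M n) (e : ∀ n, K.X n ≃ₗ[R] M n)
    (comm : ∀ n x, e n ((K.d (n + 1) n).hom x) = d n (e (n + 1) x)) (n : ℕ) :
    K.homology n ≃ₗ[R] SeqHomology d n :=
  have mem_range k x : e k x ∈ LinearMap.range (d k) ↔ ∃ y, (K.d (k + 1) k).hom y = x := by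
    rw [LinearMap.mem_range, (e (k + 1)).surjective.exists]
    exact exists_congr fun y => by rw [← comm, (e k).injective.eq_iff]
  match n with
  | 0 =>
    (ShortComplex.homologyMapIso (K.isoSc' 1 0 0 (by simp) (by simp))).toLinearEquiv ≪≫ₗ
      shortComplexHomologyEquiv (K.sc' 1 0 0) (e 0) _ _ (mem_range 0) (fun x => by
        have hd : K.d 0 0 = 0 := K.shape 0 0 (by simp)
        exact iff_of_true trivial (by rw [HomologicalComplex.shortComplexFunctor'_obj_g, hd]; rfl))
  | n + 1 =>
    (ShortComplex.homologyMapIso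
      (K.isoSc' (n + 2) (n + 1) n (by simp) (by simp))).toLinearEquiv ≪≫ₗ
      shortComplexHomologyEquiv (K.sc' (n + 2) (n + 1) n) (e (n + 1)) _ _ (mem_range (n + 1))
        (fun x => (iff_of_eq (congr_arg (· = 0) (comm n x).symm)).trans (e n).map_eq_zero_iff)

end SequenceHomology

section BarComplex

theorem inhomogeneousChains_d_trivial (R G : Type) [CommRing R] [Group G] (n : ℕ) :
    (groupHomology.inhomogeneousChains.d (Rep.trivial R G R) n).hom = barDiff R G n := by
  refine Finsupp.lhom_ext fun g r => ?_
  refine (groupHomology.inhomogeneousChains.d_single (A := Rep.trivial R G R) n g r).trans ?_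
  rw [Fin.sum_univ_castSucc, ← add_assoc]
  simp only [barDiff, Finsupp.lift_apply]
  rw [Finsupp.sum_single_index (by simp)]
  simp only [smul_add, Finset.smul_sum, Finsupp.smul_single]
  congr 1
  · congr 1
    · simp
    · refine Finset.sum_congr rfl fun i _ => ?_
      congr 1
      · funext j
        simp only [Fin.contractNth, Fin.val_castSucc]
        split_ifs with hlt heq
        · rfl
        · rw [Fin.ext heq]
        · rfl
      · simp [mul_comm]
  · congr 1
    · funext j
      simp [Fin.contractNth]
    · simp [mul_comm]

/-- `barHomology` is Mathlib's group homology with trivial coefficients. -/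
noncomputable def groupHomologyEquivBarHomology (R G : Type) [CommRing R] [Group G] (n : ℕ) :
    groupHomology (Rep.trivial R G R) n ≃ₗ[R] barHomology R G n :=
  have cycles_eq :
      seqCycles (M := fun n => (Fin n → G) →₀ R) (barDiff R G) n = barCycles R G n := by
    cases n <;> rfl
  chainComplexHomologyEquiv (M := fun n => (Fin n → G) →₀ R)
    (groupHomology.inhomogeneousChains (Rep.trivial R G R)) (barDiff R G)
    (fun n => LinearEquiv.refl R _) (fun n x => by
      rw [groupHomology.inhomogeneousChains.d_def, inhomogeneousChains_d_trivial]
      rfl) n ≪≫ₗ LinearEquiv.ofEq _ _ (by rw [cycles_eq]; rfl)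

end BarComplex

section FreeComplexes

open MonoidAlgebra

variable {R G : Type*} [CommRing R] [Group G]

/-- The augmentation of the group ring, sending every group element to `1`. -/
noncomputable def augmentation (R G : Type*) [CommRing R] [Group G] :
    MonoidAlgebra R G →ₐ[R] R :=
  MonoidAlgebra.lift R R G 1

@[simp]
theorem augmentation_single (g : G) (r : R) : augmentation R G (single g r) = r := by
  simp [augmentation]

/-- The augmentation `R[G]^(α) → R` sending every basis vector to `1`. -/
noncomputable def totalAugmentation (R G α : Type*) [CommRing R] [Group G] :
    (α →₀ MonoidAlgebra R G) →ₗ[R] R :=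
  Finsupp.lsum R fun _ => (augmentation R G).toLinearMap

@[simp]
theorem totalAugmentation_single {α : Type*} (a : α) (z : MonoidAlgebra R G) :
    totalAugmentation R G α (Finsupp.single a z) = augmentation R G z :=
  Finsupp.lsum_single _ _ _ _

/-- The coordinatewise augmentation `R[G]^(α) → R^(α)`, which is the projection to the
coinvariants. -/
noncomputable def coordAugmentation (R G α : Type*) [CommRing R] [Group G] :
    (α →₀ MonoidAlgebra R G) →ₗ[R] (α →₀ R) :=
  Finsupp.mapRange.linearMap (augmentation R G).toLinearMap

@[simp]
theorem coordAugmentation_single {α : Type*} (a : α) (z : MonoidAlgebra R G) :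
    coordAugmentation R G α (Finsupp.single a z) = Finsupp.single a (augmentation R G z) := by
  simp [coordAugmentation]

@[simp]
theorem coordAugmentation_smul {α : Type*} (z : MonoidAlgebra R G) (x : α →₀ MonoidAlgebra R G) :
    coordAugmentation R G α (z • x) = augmentation R G z • coordAugmentation R G α x := by
  ext a
  simp [coordAugmentation]

variable {α : ℕ → Type*}

/-- The `R[G]`-linear differential with prescribed values on the basis. -/
noncomputable abbrev freeDiff (d : ∀ n, α (n + 1) → (α n →₀ MonoidAlgebra R G)) (n : ℕ) :
    (α (n + 1) →₀ MonoidAlgebra R G) →ₗ[MonoidAlgebra R G] (α n →₀ MonoidAlgebra R G) :=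
  Finsupp.linearCombination (MonoidAlgebra R G) (d n)

/-- The differential induced by `freeDiff` on the coinvariants. -/
noncomputable def coinvDiff (d : ∀ n, α (n + 1) → (α n →₀ MonoidAlgebra R G)) (n : ℕ) :
    (α (n + 1) →₀ R) →ₗ[R] (α n →₀ R) :=
  Finsupp.linearCombination R fun a => coordAugmentation R G (α n) (d n a)

theorem coordAugmentation_freeDiff (d : ∀ n, α (n + 1) → (α n →₀ MonoidAlgebra R G)) (n : ℕ)
    (x : α (n + 1) →₀ MonoidAlgebra R G) :
    coordAugmentation R G (α n) (freeDiff d n x) =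
      coinvDiff d n (coordAugmentation R G (α (n + 1)) x) := by
  induction x using Finsupp.induction_linear with
  | zero => simp only [map_zero]
  | add x y hx hy => simp only [map_add, hx, hy]
  | single a z => simp [coinvDiff]

/-- The free modules `R[G]^(α n)` with the differentials `freeDiff d` resolve the trivial module
`R`. -/
structure IsFreeResolution (d : ∀ n, α (n + 1) → (α n →₀ MonoidAlgebra R G)) : Prop where
  surjective : Function.Surjective (totalAugmentation R G (α 0))
  exact_zero : Function.Exact (freeDiff d 0) (totalAugmentation R G (α 0))
  exact_succ : ∀ n, Function.Exact (freeDiff d (n + 1)) (freeDiff d n)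

end FreeComplexes

section FreeResolutions

open CategoryTheory
open scoped TensorProduct MonoidalCategory

variable {R G : Type} [CommRing R] [Group G]

theorem repShortComplex_exact (S : ShortComplex (Rep.{0} R G))
    (h : Function.Exact S.f.hom S.g.hom) : S.Exact := by
  apply (forget₂ (Rep.{0} R G) (ModuleCat R)).reflects_exact_of_faithful
  exact (ShortComplex.moduleCat_exact_iff _).mpr fun x hx => (h x).mp hx

theorem quasiIso_toSingle₀Equiv_symm (K : ChainComplex (Rep.{0} R G) ℕ) (A : Rep.{0} R G)
    (ε : K.X 0 ⟶ A) (d_comp_ε : K.d 1 0 ≫ ε = 0) (surjective : Function.Surjective ε.hom)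
    (exact_zero : Function.Exact (K.d 1 0).hom ε.hom)
    (exact_succ : ∀ n, Function.Exact (K.d (n + 2) (n + 1)).hom (K.d (n + 1) n).hom) :
    QuasiIso ((K.toSingle₀Equiv A).symm ⟨ε, d_comp_ε⟩) where
  quasiIsoAt
    | 0 => by
      have f_zero := ChainComplex.toSingle₀Equiv_symm_apply_f_zero ε d_comp_ε
      rw [ChainComplex.quasiIsoAt₀_iff,
        ShortComplex.quasiIso_iff_of_zeros' _ (K.shape _ _ (by simp)) rfl rfl]
      refine ⟨repShortComplex_exact _ ?_, ?_⟩
      · change Function.Exact (K.d 1 0).hom (((K.toSingle₀Equiv A).symm ⟨ε, d_comp_ε⟩).f 0).hom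
        rwa [f_zero]
      · change Epi (((K.toSingle₀Equiv A).symm ⟨ε, d_comp_ε⟩).f 0)
        rw [f_zero]
        exact (Rep.epi_iff_surjective ε).mpr surjective
    | m + 1 => by
      rw [quasiIsoAt_iff_exactAt' (hL := ChainComplex.exactAt_succ_single_obj ..),
        HomologicalComplex.exactAt_iff' _ (m + 2) (m + 1) m (by simp) (by simp)]
      exact repShortComplex_exact _ (exact_succ m)

theorem free_apply_eq_single_smul {α : Type} (g : G) (x : α →₀ MonoidAlgebra R G) :
    Representation.free R G α g x = MonoidAlgebra.single g (1 : R) • x := by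
  suffices h : Representation.free R G α g =
      Algebra.lsmul R R (α →₀ MonoidAlgebra R G) (MonoidAlgebra.single g (1 : R)) from
    LinearMap.congr_fun h x
  refine Finsupp.lhom_ext' fun a => MonoidAlgebra.lhom_ext' fun h => LinearMap.ext_ring ?_
  simp

theorem freeLift_free_eq_freeDiff {α : ℕ → Type}
    (d : ∀ n, α (n + 1) → (α n →₀ MonoidAlgebra R G)) (n : ℕ)
    (x : α (n + 1) →₀ MonoidAlgebra R G) :
    Representation.freeLift (Representation.free R G (α n)) (d n) x = freeDiff d n x := by
  suffices h : (Representation.freeLift (Representation.free R G (α n)) (d n)).toLinearMap =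
      (freeDiff d n).restrictScalars R from LinearMap.congr_fun h x
  refine Finsupp.lhom_ext' fun a => MonoidAlgebra.lhom_ext' fun g => LinearMap.ext_ring ?_
  simp [free_apply_eq_single_smul]

theorem freeLift_one_eq_totalAugmentation {α : Type} (x : α →₀ MonoidAlgebra R G) :
    Representation.freeLift (Representation.trivial R G R) (fun _ => 1) x =
      totalAugmentation R G α x := by
  suffices h : (Representation.freeLift (Representation.trivial R G R)
      fun _ : α => 1).toLinearMap = totalAugmentation R G α from LinearMap.congr_fun h x
  ext a g
  simp [totalAugmentation]

theorem coinvariantsTensorFreeToFinsupp_mk_tmul {α : Type} [DecidableEq α] (r : R)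
    (x : α →₀ MonoidAlgebra R G) :
    DFunLike.coe (F := ((Representation.trivial R G R).tprod
        (Representation.free R G α)).Coinvariants →ₗ[R] α →₀ R)
      (Rep.coinvariantsTensorFreeToFinsupp (Rep.trivial R G R) α)
      (Representation.Coinvariants.mk _ (r ⊗ₜ x)) = r • coordAugmentation R G α x := by
  induction x using Finsupp.induction_linear with
  | zero => simp
  | add x y hx hy => simp only [TensorProduct.tmul_add, map_add, hx, hy, smul_add]
  | single a z =>
    induction z using MonoidAlgebra.induction_linear with
    | zero => simp
    | add x y hx hy =>
      simp only [Finsupp.single_add, TensorProduct.tmul_add, map_add, hx, hy, smul_add]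
    | single h s =>
      refine (Rep.coinvariantsTensorFreeToFinsupp_mk_tmul_single
        (Rep.trivial R G R) r a h s).trans ?_
      simp [mul_comm]

variable {α : ℕ → Type} {d : ∀ n, α (n + 1) → (α n →₀ MonoidAlgebra R G)}

namespace IsFreeResolution

/-- A free resolution as a chain complex of representations. -/
noncomputable def complex (hd : IsFreeResolution d) : ChainComplex (Rep.{0} R G) ℕ :=
  ChainComplex.of (fun n => Rep.free R G (α n)) (fun n => Rep.freeLift R G _ (d n)) fun n => by
    apply Rep.free_ext
    intro a
    refine (freeLift_free_eq_freeDiff d n _).trans ?_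
    refine (congr_arg _ (freeLift_free_eq_freeDiff d (n + 1) _)).trans ?_
    exact (hd.exact_succ n).apply_apply_eq_zero _

theorem complex_d_hom (hd : IsFreeResolution d) (n : ℕ) :
    ⇑(hd.complex.d (n + 1) n).hom = freeDiff d n := by
  have d_eq : hd.complex.d (n + 1) n = Rep.freeLift R G _ (d n) :=
    ChainComplex.of_d (fun n => Rep.free R G (α n)) (fun n => Rep.freeLift R G _ (d n)) n
  rw [d_eq]
  exact funext (freeLift_free_eq_freeDiff d n)

/-- A free resolution as a projective resolution of the trivial representation. -/
noncomputable def projectiveResolution (hd : IsFreeResolution d) :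
    ProjectiveResolution (Rep.trivial R G R) :=
  let ε : Rep.free R G (α 0) ⟶ Rep.trivial R G R := Rep.freeLift R G _ fun _ => (1 : R)
  have hε : ⇑ε.hom = totalAugmentation R G (α 0) := funext freeLift_one_eq_totalAugmentation
  have surjective : Function.Surjective ε.hom := by
    rw [hε]
    exact hd.surjective
  have exact_zero : Function.Exact (hd.complex.d 1 0).hom ε.hom := by
    rw [complex_d_hom, hε]
    exact hd.exact_zero
  { complex := hd.complex
    projective := fun n => inferInstanceAs (Projective (Rep.free R G (α n)))
    π := (hd.complex.toSingle₀Equiv _).symm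
      ⟨ε, by ext x; exact exact_zero.apply_apply_eq_zero x⟩
    quasiIso := quasiIso_toSingle₀Equiv_symm _ _ _ _ surjective exact_zero fun n => by
      rw [complex_d_hom, complex_d_hom]
      exact hd.exact_succ n }

theorem coinvariantsTensorFreeLEquiv_comm [∀ n, DecidableEq (α n)] (hd : IsFreeResolution d)
    (n : ℕ) (x : (hd.complex.coinvariantsTensorObj (Rep.trivial R G R)).X (n + 1)) :
    Rep.coinvariantsTensorFreeLEquiv (Rep.trivial R G R) (α n)
        (((hd.complex.coinvariantsTensorObj (Rep.trivial R G R)).d (n + 1) n).hom x) =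
      coinvDiff d n (Rep.coinvariantsTensorFreeLEquiv (Rep.trivial R G R) (α (n + 1)) x) := by
  let K := hd.complex.coinvariantsTensorObj (Rep.trivial R G R)
  let e n : K.X n ≃ₗ[R] (α n →₀ R) := Rep.coinvariantsTensorFreeLEquiv (Rep.trivial R G R) (α n)
  let proj n : R ⊗[R] (α n →₀ MonoidAlgebra R G) →ₗ[R] K.X n := Representation.Coinvariants.mk
    ((Representation.trivial R G R).tprod (Representation.free R G (α n)))
  have e_proj n r x : e n (proj n (r ⊗ₜ x)) = r • coordAugmentation R G (α n) x :=
    coinvariantsTensorFreeToFinsupp_mk_tmul r x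
  have d_proj r x : (K.d (n + 1) n).hom (proj (n + 1) (r ⊗ₜ x)) = proj n (r ⊗ₜ freeDiff d n x) := by
    rw [← hd.complex_d_hom]
    rfl
  suffices h : ((e n).toLinearMap ∘ₗ (K.d (n + 1) n).hom) ∘ₗ proj (n + 1) =
      (coinvDiff d n ∘ₗ (e (n + 1)).toLinearMap) ∘ₗ proj (n + 1) by
    obtain ⟨x, rfl⟩ := Representation.Coinvariants.mk_surjective _ x
    exact LinearMap.congr_fun h x
  refine TensorProduct.ext' fun r x => ?_
  change e n ((K.d (n + 1) n).hom (proj (n + 1) (r ⊗ₜ x))) =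
    coinvDiff d n (e (n + 1) (proj (n + 1) (r ⊗ₜ x)))
  rw [d_proj, e_proj, e_proj, map_smul, coordAugmentation_freeDiff]

open Classical in
/-- The homology of a group is computed by the coinvariants of any free resolution. -/
noncomputable def barHomologyEquiv (hd : IsFreeResolution d) (n : ℕ) :
    barHomology R G n ≃ₗ[R] SeqHomology (M := fun n => α n →₀ R) (coinvDiff d) n :=
  (groupHomologyEquivBarHomology R G n).symm ≪≫ₗ
    (groupHomologyIso (Rep.trivial R G R) n hd.projectiveResolution).toLinearEquiv ≪≫ₗ
    chainComplexHomologyEquiv (hd.complex.coinvariantsTensorObj (Rep.trivial R G R))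
      (M := fun n => α n →₀ R) (coinvDiff d)
      (fun n => Rep.coinvariantsTensorFreeLEquiv (Rep.trivial R G R) (α n))
      hd.coinvariantsTensorFreeLEquiv_comm n

end IsFreeResolution

end FreeResolutions

section BoundaryWords

/-- A family of elements of an abelian group whose differences represent every nonzero element
exactly once. -/
structure IsDifferenceFamily {ι A : Type*} [AddCommGroup A] (f : ι → A) : Prop where
  injective : Function.Injective f
  exists_sub_eq : ∀ x ≠ 0, ∃ i j, f i - f j = x
  eq_of_sub_eq_sub : ∀ {i j k l}, i ≠ j → f i - f j = f k - f l → i = k ∧ j = l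

/-- The sequence `s` without its first term. -/
def shift {B : Type*} (s : ℕ → B) : ℕ → B := fun n => s (n + 1)

/-- The sequence `s` preceded by `b`. -/
def cons {B : Type*} (b : B) (s : ℕ → B) : ℕ → B
  | 0 => b
  | n + 1 => s n

@[simp]
theorem cons_zero {B : Type*} (b : B) (s : ℕ → B) : cons b s 0 = b := rfl

@[simp]
theorem shift_cons {B : Type*} (b : B) (s : ℕ → B) : shift (cons b s) = s := rfl

@[simp]
theorem cons_zero_shift {B : Type*} (s : ℕ → B) : cons (s 0) (shift s) = s := by
  funext n
  cases n <;> rfl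

/-- A word encodes a ray in the building that starts at a vertex: its `n`-th letter is the edge
leaving the `n`-th vertex of the ray, and consecutive edges lie in a common triangle if and only
if the letter of the second one is in the image of `D (n + 1)`. The word is admissible if the ray
is straight, that is, if no two consecutive edges lie in a triangle. -/
def IsAdmissible {ι A : Type*} (D : ℕ → ι → A) (s : ℕ → A) : Prop :=
  ∀ n i, s (n + 1) ≠ D (n + 1) i

theorem IsAdmissible.shift {ι A : Type*} {D : ℕ → ι → A} {s : ℕ → A} (hs : IsAdmissible D s) :
    IsAdmissible (shift D) (shift s) :=
  fun n => hs (n + 1)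

variable {ι A : Type*} [AddCommGroup A] {D : ℕ → ι → A} {s : ℕ → A} {i i' : ℕ → ι}

/-- The word whose letters are the differences of the terms of `D` indexed by `i` and `i'`,
corrected by the carry `D (n + 1) (i n)` from the preceding letter. -/
def carryWord (D : ℕ → ι → A) (i i' : ℕ → ι) : ℕ → A
  | 0 => D 0 (i 0) - D 0 (i' 0)
  | n + 1 => D (n + 1) (i (n + 1)) - D (n + 1) (i' (n + 1)) + D (n + 1) (i n)

theorem carryWord_injOn (hD : ∀ n, IsDifferenceFamily (D n)) {j j' : ℕ → ι}
    (hi : ∀ n, i n ≠ i' n) (h : carryWord D i i' = carryWord D j j') : i = j ∧ i' = j' := by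
  suffices ∀ n, i n = j n ∧ i' n = j' n from
    ⟨funext fun n => (this n).1, funext fun n => (this n).2⟩
  intro n
  induction n with
  | zero => exact (hD 0).eq_of_sub_eq_sub (hi 0) (congr_fun h 0)
  | succ n ih =>
    have h_succ := congr_fun h (n + 1)
    rw [carryWord, carryWord, ih.1] at h_succ
    exact (hD (n + 1)).eq_of_sub_eq_sub (hi (n + 1)) (add_right_cancel h_succ)

theorem exists_carryWord_eq (hD : ∀ n, IsDifferenceFamily (D n)) (hs : IsAdmissible D s)
    (hs0 : s 0 ≠ 0) : ∃ i i', (∀ n, i n ≠ i' n) ∧ carryWord D i i' = s := by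
  have exists_pair n (x : A) : ∃ p : ι × ι, x ≠ 0 → p.1 ≠ p.2 ∧ D n p.1 - D n p.2 = x := by
    obtain ⟨a, b, -⟩ := (hD 0).exists_sub_eq _ hs0
    by_cases hx : x = 0
    · exact ⟨(a, b), fun h => (h hx).elim⟩
    · obtain ⟨a, b, hab⟩ := (hD n).exists_sub_eq x hx
      exact ⟨(a, b), fun _ => ⟨fun h : a = b => hx (by rw [← hab, h, sub_self]), hab⟩⟩
  choose pair h_pair using exists_pair
  let p : ℕ → ι × ι :=
    Nat.rec (pair 0 (s 0)) fun n prev => pair (n + 1) (s (n + 1) - D (n + 1) prev.1)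
  have p_zero := h_pair 0 (s 0) hs0
  have p_succ n := h_pair (n + 1) (s (n + 1) - D (n + 1) (p n).1) (sub_ne_zero.2 (hs n _))
  refine ⟨fun n => (p n).1, fun n => (p n).2, fun n => ?_, funext fun n => ?_⟩
  · cases n with
    | zero => exact p_zero.1
    | succ n => exact (p_succ n).1
  · cases n with
    | zero => exact p_zero.2
    | succ n => exact eq_sub_iff_add_eq.1 (p_succ n).2

theorem IsAdmissible.ne_of_carryWord (h : IsAdmissible D (carryWord D i i')) (n : ℕ) :
    i' (n + 1) ≠ i n := fun hn =>
  h n (i (n + 1)) (by rw [carryWord, hn, sub_add_cancel])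

theorem isAdmissible_carryWord (hD : ∀ n, IsDifferenceFamily (D n))
    (hi : ∀ n, i (n + 1) ≠ i' (n + 1)) (hi' : ∀ n, i' (n + 1) ≠ i n) :
    IsAdmissible D (carryWord D i i') := fun n _ ha =>
  hi' n ((hD (n + 1)).eq_of_sub_eq_sub (hi n) (eq_sub_of_add_eq ha)).2

/-- The change of the base edge at the starting vertex. -/
def translate (a : A) (s : ℕ → A) : ℕ → A := cons (s 0 - a) (shift s)

theorem translate_translate (a b : A) (s : ℕ → A) :
    translate a (translate b s) = translate (b + a) s := by
  simp [translate, sub_sub]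

theorem translate_zero (s : ℕ → A) : translate 0 s = s := by
  simp [translate]

theorem isAdmissible_translate {a : A} : IsAdmissible D (translate a s) ↔ IsAdmissible D s :=
  Iff.rfl

/-- The word obtained from `carryWord D i i'` by moving the starting vertex of the ray along an
edge that is not on the ray. -/
def turn (D : ℕ → ι → A) (i i' : ℕ → ι) : ℕ → A
  | 0 => D 1 (i' 0)
  | n + 1 => D (n + 2) (i' (n + 1)) - D (n + 2) (i n) + D (n + 2) (i' n)

theorem translate_turn (D : ℕ → ι → A) (i i' : ℕ → ι) (j : ι) :
    translate (D 1 j) (turn D i i') = carryWord (shift D) i' (cons j i) := by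
  funext n
  cases n <;> rfl

open Classical in
/-- Moves the starting vertex of the ray `x.1` along the base edge, keeping track of the height
`x.2` relative to the end of the ray. -/
noncomputable def advance (D : ℕ → ι → A) (x : (ℕ → A) × ℤ) : (ℕ → A) × ℤ :=
  if x.1 0 = 0 then (shift x.1, x.2 - 2)
  else if h : ∃ p : (ℕ → ι) × (ℕ → ι), (∀ n, p.1 n ≠ p.2 n) ∧ carryWord D p.1 p.2 = x.1 then
    (turn D h.choose.1 h.choose.2, x.2 + 1)
  else x

theorem advance_of_eq_zero (D : ℕ → ι → A) {h : ℤ} (hs : s 0 = 0) :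
    advance D (s, h) = (shift s, h - 2) := if_pos hs

theorem advance_carryWord (hD : ∀ n, IsDifferenceFamily (D n)) (hi : ∀ n, i n ≠ i' n) (h : ℤ) :
    advance D (carryWord D i i', h) = (turn D i i', h + 1) := by
  have h_exists : ∃ p : (ℕ → ι) × (ℕ → ι),
      (∀ n, p.1 n ≠ p.2 n) ∧ carryWord D p.1 p.2 = carryWord D i i' := ⟨(i, i'), hi, rfl⟩
  obtain ⟨h_fst, h_snd⟩ := carryWord_injOn hD h_exists.choose_spec.1 h_exists.choose_spec.2
  have ne_zero : carryWord D i i' 0 ≠ 0 := sub_ne_zero.2 fun h => hi 0 ((hD 0).injective h)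
  rw [advance, if_neg ne_zero, dif_pos h_exists, h_fst, h_snd]

theorem isAdmissible_advance (hD : ∀ n, IsDifferenceFamily (D n)) (hs : IsAdmissible D s)
    (h : ℤ) : IsAdmissible (shift D) (advance D (s, h)).1 := by
  by_cases hs0 : s 0 = 0
  · rw [advance_of_eq_zero D hs0]
    exact hs.shift
  · obtain ⟨i, i', hi, rfl⟩ := exists_carryWord_eq hD hs hs0
    rw [advance_carryWord hD hi, ← isAdmissible_translate (a := D 1 (i' 0)), translate_turn]
    exact isAdmissible_carryWord (fun n => hD (n + 1)) hs.ne_of_carryWord fun n => hi n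

theorem height_advance (hD : ∀ n, IsDifferenceFamily (D n)) (hs : IsAdmissible D s) (h : ℤ)
    [Decidable (s 0 = 0)] : (advance D (s, h)).2 = h + if s 0 = 0 then -2 else 1 := by
  split_ifs with hs0
  · rw [advance_of_eq_zero D hs0]
    rfl
  · obtain ⟨i, i', hi, rfl⟩ := exists_carryWord_eq hD hs hs0
    rw [advance_carryWord hD hi]

/-- Moves the starting vertex to the next vertex of the `j`-th triangle at the base edge. -/
noncomputable def pivot (D : ℕ → ι → A) (j : ι) (x : (ℕ → A) × ℤ) : (ℕ → A) × ℤ :=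
  (advance D x).map (translate (D 1 j)) id

theorem pivot_carryWord (hD : ∀ n, IsDifferenceFamily (D n)) (hi : ∀ n, i n ≠ i' n) (j : ι)
    (h : ℤ) :
    pivot D j (carryWord D i i', h) = (carryWord (shift D) i' (cons j i), h + 1) := by
  rw [pivot, advance_carryWord hD hi, Prod.map, translate_turn, id]

theorem carryWord_cons_cons (D : ℕ → ι → A) (i i' : ℕ → ι) (j : ι) :
    carryWord D (cons j i) (cons j i') =
      cons 0 (translate (-D 1 j) (carryWord (shift D) i i')) := by
  funext n
  match n with
  | 0 => exact sub_self _
  | 1 => exact (sub_neg_eq_add _ _).symm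
  | n + 2 => rfl

theorem pivot_carryWord_cons_cons (D : ℕ → ι → A) (i i' : ℕ → ι) (j : ι) (h : ℤ) :
    pivot D j (carryWord D (cons j i) (cons j i'), h) = (carryWord (shift D) i i', h - 2) := by
  rw [carryWord_cons_cons, pivot, advance_of_eq_zero D (cons_zero _ _), Prod.map, shift_cons,
    translate_translate, neg_add_cancel, translate_zero, id]

/-- The three vertices of a triangle carry the words of `(i, i')`, `(i', j :: i)` and
`(j :: i, j :: i')`, in this cyclic order. -/
theorem pivot_pivot_pivot (hD : ∀ n, IsDifferenceFamily (D n))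
    (periodic : shift (shift (shift D)) = D) (hs : IsAdmissible D s) (h : ℤ) (j : ι) :
    pivot (shift (shift D)) j (pivot (shift D) j (pivot D j (s, h))) = (s, h) := by
  have hD₁ n : IsDifferenceFamily (shift D n) := hD (n + 1)
  have hD₂ n : IsDifferenceFamily (shift (shift D) n) := hD (n + 2)
  have cons_ne {a b : ℕ → ι} (h0 : a 0 ≠ j) (h_succ : ∀ n, a (n + 1) ≠ b n) (n : ℕ) :
      a n ≠ cons j b n := by
    cases n with
    | zero => exact h0
    | succ n => exact h_succ n
  by_cases hs0 : s 0 = 0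
  · obtain ⟨i, i', hi, hii'⟩ := exists_carryWord_eq hD₁
      (isAdmissible_translate (a := D 1 j).2 hs.shift) (sub_ne_zero.2 (hs 0 j))
    obtain rfl : carryWord D (cons j i) (cons j i') = s := by
      rw [carryWord_cons_cons, hii', translate_translate, add_neg_cancel, translate_zero, ← hs0,
        cons_zero_shift]
    have hi' : ∀ n, i' n ≠ cons j i n := hs.ne_of_carryWord
    rw [pivot_carryWord_cons_cons, pivot_carryWord hD₁ hi, pivot_carryWord hD₂ hi', periodic]
    congr 1
    ring
  · obtain ⟨i, i', hi, rfl⟩ := exists_carryWord_eq hD hs hs0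
    by_cases hj : i' 0 = j
    · obtain ⟨b, rfl⟩ : ∃ b, i' = cons j b := ⟨shift i', by rw [← hj, cons_zero_shift]⟩
      have hb : ∀ n, b n ≠ i n := hs.ne_of_carryWord
      rw [pivot_carryWord hD hi, pivot_carryWord_cons_cons, pivot_carryWord hD₂ hb, periodic]
      congr 1
      ring
    · rw [pivot_carryWord hD hi, pivot_carryWord hD₁ (cons_ne hj hs.ne_of_carryWord),
        pivot_carryWord_cons_cons, periodic]
      congr 1
      ring

end BoundaryWords

section CyclicFamilies

variable {ι A : Type*} {δ : Fin 3 → ι → A}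

/-- The families `δ k, δ (k + 1), δ (k + 2), δ k, …` governing rays that start at a vertex of
type `k`. -/
def cyclicFamily (δ : Fin 3 → ι → A) (k : Fin 3) : ℕ → ι → A := fun n => δ (Fin.ofNat 3 (k + n))

theorem shift_cyclicFamily (k : Fin 3) : shift (cyclicFamily δ k) = cyclicFamily δ (k + 1) := by
  funext n
  refine congrArg δ (Fin.ext ?_)
  simp only [Fin.ofNat_eq_cast, Fin.val_natCast, Fin.val_add, Fin.val_one]
  omega

theorem add_one_add_one_add_one (k : Fin 3) : k + 1 + 1 + 1 = k := by
  revert k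
  decide

/-- An edge whose source is a vertex of type `k`, described by a ray from the source with base
edge the given one, and by the height of the source relative to the end of the ray. -/
abbrev State (δ : Fin 3 → ι → A) (k : Fin 3) : Type _ :=
  {x : (ℕ → A) × ℤ // IsAdmissible (cyclicFamily δ k) x.1}

variable [AddCommGroup A]

/-- `a` acts on the edges with a common source as the rotation by `a`. -/
def rotate (δ : Fin 3 → ι → A) (k : Fin 3) : Multiplicative A →* Equiv.Perm (State δ k) :=
  MonoidHom.toHomPerm
    { toFun := fun a x => ⟨(translate (-a.toAdd) x.1.1, x.1.2), isAdmissible_translate.2 x.2⟩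
      map_one' := by
        funext x
        refine Subtype.ext (Prod.ext ?_ rfl)
        exact (congrArg (translate · x.1.1) neg_zero).trans (translate_zero x.1.1)
      map_mul' := fun a b => by
        funext x
        refine Subtype.ext (Prod.ext ?_ rfl)
        exact ((translate_translate _ _ _).trans
          (congrArg (translate · x.1.1) (neg_add_rev a.toAdd b.toAdd).symm)).symm }

theorem rotate_inv_apply (k : Fin 3) (a : A) (x : State δ k) :
    ((rotate δ k (.ofAdd a))⁻¹ x).1 = (translate a x.1.1, x.1.2) := by
  rw [← map_inv, ← ofAdd_neg]
  exact congrArg (fun b => (translate b x.1.1, x.1.2)) (neg_neg a)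

theorem pivot_base {o : ι} (h_base : ∀ k, δ k o = 0) (k : Fin 3) (x : (ℕ → A) × ℤ) :
    pivot (cyclicFamily δ k) o x = advance (cyclicFamily δ k) x := by
  rw [pivot, cyclicFamily, h_base]
  exact Prod.ext (translate_zero _) rfl

variable (hδ : ∀ k, IsDifferenceFamily (δ k))
include hδ

theorem isDifferenceFamily_cyclicFamily (k : Fin 3) (n : ℕ) :
    IsDifferenceFamily (cyclicFamily δ k n) := hδ _

/-- The passage to the next edge of the triangle with index `o` at an edge. -/
noncomputable def next (k : Fin 3) (x : State δ k) : State δ (k + 1) :=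
  ⟨advance (cyclicFamily δ k) x.1,
    (shift_cyclicFamily k).subst (motive := (IsAdmissible · _))
      (isAdmissible_advance (isDifferenceFamily_cyclicFamily hδ k) x.2 x.1.2)⟩

theorem pivot_next_next (k : Fin 3) (x : State δ k) (j : ι) :
    pivot (cyclicFamily δ (k + 1 + 1)) j
      (pivot (cyclicFamily δ (k + 1)) j (pivot (cyclicFamily δ k) j x.1)) = x.1 := by
  simp only [← shift_cyclicFamily]
  refine pivot_pivot_pivot (isDifferenceFamily_cyclicFamily hδ k) ?_ x.2 _ _
  simp only [shift_cyclicFamily, add_one_add_one_add_one]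

variable {o : ι} (h_base : ∀ k, δ k o = 0)
include h_base

theorem next_next_next (k : Fin 3) (x : State δ k) :
    (next hδ (k + 1 + 1) (next hδ (k + 1) (next hδ k x))).1 = x.1 := by
  have h := pivot_next_next hδ k x o
  simp only [pivot_base h_base] at h
  exact h

/-- The identification of the edges of type `0` with the edges of type `k` in the triangle
with index `o`. -/
noncomputable def edgeEquiv : ∀ k : Fin 3, State δ 0 ≃ State δ k
  | 0 => Equiv.refl _
  | 1 =>
    { toFun := next hδ 0
      invFun := fun x => next hδ 2 (next hδ 1 x)
      left_inv := fun x => Subtype.ext (next_next_next hδ h_base 0 x)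
      right_inv := fun x => Subtype.ext (next_next_next hδ h_base 1 x) }
  | 2 =>
    { toFun := fun x => next hδ 1 (next hδ 0 x)
      invFun := next hδ 2
      left_inv := fun x => Subtype.ext (next_next_next hδ h_base 0 x)
      right_inv := fun x => Subtype.ext (next_next_next hδ h_base 2 x) }

theorem edgeEquiv_add_one (k : Fin 3) (x : State δ 0) :
    edgeEquiv hδ h_base (k + 1) x = next hδ k (edgeEquiv hδ h_base k x) := by
  match k with
  | 0 => rfl
  | 1 => rfl
  | 2 => exact Subtype.ext (next_next_next hδ h_base 0 x).symm

/-- The element `a` acts on the edges of type `0` by rotating the edges of type `k` in the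
triangles with index `o`. -/
noncomputable def rotateHom (k : Fin 3) : Multiplicative A →* Equiv.Perm (State δ 0) :=
  (edgeEquiv hδ h_base k).symm.permCongrHom.toMonoidHom.comp (rotate δ k)

theorem edgeEquiv_rotateHom_inv (k : Fin 3) (a : A) (x : State δ 0) :
    (edgeEquiv hδ h_base k ((rotateHom hδ h_base k (.ofAdd a))⁻¹ x)).1 =
      (translate a (edgeEquiv hδ h_base k x).1.1, (edgeEquiv hδ h_base k x).1.2) := by
  rw [← rotate_inv_apply, ← map_inv (rotate δ k), ← map_inv (rotateHom hδ h_base k)]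
  exact congrArg Subtype.val ((edgeEquiv hδ h_base k).apply_symm_apply _)

theorem pivot_edgeEquiv (k : Fin 3) (j : ι) (x : State δ 0) :
    pivot (cyclicFamily δ k) j (edgeEquiv hδ h_base k x).1 = (edgeEquiv hδ h_base (k + 1)
      ((rotateHom hδ h_base (k + 1) (.ofAdd (δ (k + 1) j)))⁻¹ x)).1 := by
  have h_family : cyclicFamily δ k 1 = δ (k + 1) := congr_fun (shift_cyclicFamily k) 0 |>.trans
    (congrArg δ (Fin.ofNat_val_eq_self _))
  rw [edgeEquiv_rotateHom_inv, edgeEquiv_add_one, ← h_family]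
  rfl

theorem rotateHom_triangle (j : ι) :
    rotateHom hδ h_base 0 (.ofAdd (δ 0 j)) * rotateHom hδ h_base 1 (.ofAdd (δ 1 j)) *
      rotateHom hδ h_base 2 (.ofAdd (δ 2 j)) = 1 := by
  refine inv_injective (Equiv.ext fun x => ?_)
  have h := pivot_next_next hδ 0
    (edgeEquiv hδ h_base 0 ((rotateHom hδ h_base 0 (.ofAdd (δ 0 j)))⁻¹ x)) j
  rw [pivot_edgeEquiv, pivot_edgeEquiv, pivot_edgeEquiv] at h
  rw [mul_inv_rev, mul_inv_rev, inv_one]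
  exact Equiv.injective _ ((edgeEquiv hδ h_base 0).injective (Subtype.ext h))

end CyclicFamilies

/-- An assignment of heights to the vertices of the complex built from the cosets of three
elements `s k` of order dividing `N`. The vertices of type `k` are the cosets of the powers of
`s k`, and `g` is viewed as an edge from its coset of type `k` to its coset of type `k + 1`.
A horofunction climbs one step along each of the edges leaving a given vertex of type `k`,
except for the one edge of offset zero, along which it descends two steps. -/
structure Horofunction {G : Type*} [Group G] (s : Fin 3 → G) (N : ℕ) where
  /-- The position of an edge among the edges with the same source. -/
  offset : Fin 3 → G → ZMod N
  /-- The height of the source of an edge. -/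
  height : Fin 3 → G → ℤ
  offset_mul : ∀ k g, offset k (g * s k) = offset k g + 1
  height_mul : ∀ k g, height k (g * s k) = height k g
  height_succ : ∀ k g, height (k + 1) g = height k g + if offset k g = 0 then -2 else 1

/-- The pull-back of the heights of states along the orbit map of the state `x`. -/
noncomputable def horofunctionOfAction {ι G : Type*} [Group G] {N : ℕ} {δ : Fin 3 → ι → ZMod N}
    (hδ : ∀ k, IsDifferenceFamily (δ k)) {o : ι} (h_base : ∀ k, δ k o = 0) {s : Fin 3 → G}
    (φ : G →* Equiv.Perm (State δ 0))
    (hφ : ∀ k, φ (s k) = rotateHom hδ h_base k (.ofAdd 1)) (x : State δ 0) :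
    Horofunction s N :=
  have edgeEquiv_mul k g : (edgeEquiv hδ h_base k (φ (g * s k)⁻¹ x)).1 =
      (translate 1 (edgeEquiv hδ h_base k (φ g⁻¹ x)).1.1,
        (edgeEquiv hδ h_base k (φ g⁻¹ x)).1.2) := by
    rw [← edgeEquiv_rotateHom_inv, ← hφ, ← map_inv, mul_inv_rev, map_mul, Equiv.Perm.mul_apply]
  { offset := fun k g => -(edgeEquiv hδ h_base k (φ g⁻¹ x)).1.1 0
    height := fun k g => (edgeEquiv hδ h_base k (φ g⁻¹ x)).1.2
    offset_mul := fun k g => by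
      rw [edgeEquiv_mul]
      exact neg_sub' _ _ |>.trans (sub_neg_eq_add _ _)
    height_mul := fun k g => by rw [edgeEquiv_mul]
    height_succ := fun k g => by
      rw [edgeEquiv_add_one]
      simp only [neg_eq_zero]
      exact height_advance (isDifferenceFamily_cyclicFamily hδ k)
        (edgeEquiv hδ h_base k (φ g⁻¹ x)).2 _ }

section GroupRing

variable {R G : Type*} [CommRing R] [Group G]

/-- The inclusion of a group in its group ring. It is a copy of `MonoidAlgebra.of` that the
simplifier does not unfold, so that calculations can use the lemmas on monoid homomorphisms. -/
noncomputable def groupElem : G →* MonoidAlgebra R G := MonoidAlgebra.of R G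

@[simp]
theorem augmentation_groupElem (g : G) : augmentation R G (groupElem g) = 1 :=
  augmentation_single g 1

theorem coeff_mul_groupElem (x : MonoidAlgebra R G) (g h : G) :
    (x * groupElem g).coeff (h * g) = x.coeff h := by
  simp [groupElem]

section LinearExtension

variable {V : Type*} [AddCommGroup V] [Module R V]

theorem linearMap_ext_groupElem {f f' : MonoidAlgebra R G →ₗ[R] V}
    (h : ∀ g, f (groupElem g) = f' (groupElem g)) : f = f' :=
  MonoidAlgebra.lhom_ext' fun g => LinearMap.ext_ring (h g)

/-- The linear map on the group ring with prescribed values on the group elements. -/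
noncomputable def linearExtension (f : G → V) : MonoidAlgebra R G →ₗ[R] V :=
  Finsupp.linearCombination R f ∘ₗ (MonoidAlgebra.coeffLinearEquiv R).toLinearMap

@[simp]
theorem linearExtension_groupElem (f : G → V) (g : G) :
    linearExtension f (groupElem g : MonoidAlgebra R G) = f g := by
  simp [linearExtension, groupElem, MonoidAlgebra.coeffLinearEquiv]

end LinearExtension

/-- The element `1 + s + ⋯ + s ^ (m - 1)` of the group ring. -/
noncomputable def geomSum (s : G) (m : ℕ) : MonoidAlgebra R G :=
  ∑ i ∈ Finset.range m, groupElem s ^ i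

@[simp]
theorem geomSum_zero (s : G) : (geomSum s 0 : MonoidAlgebra R G) = 0 := rfl

theorem geomSum_succ (s : G) (m : ℕ) :
    (geomSum s (m + 1) : MonoidAlgebra R G) = geomSum s m + groupElem (s ^ m) := by
  rw [geomSum, Finset.sum_range_succ, map_pow, geomSum]

theorem geomSum_mul_sub_one (s : G) (m : ℕ) :
    geomSum s m * (groupElem s - 1 : MonoidAlgebra R G) = groupElem (s ^ m) - 1 := by
  rw [map_pow, geomSum, geom_sum_mul]

theorem sub_one_mul_geomSum (s : G) (m : ℕ) :
    (groupElem s - 1 : MonoidAlgebra R G) * geomSum s m = groupElem (s ^ m) - 1 := by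
  rw [map_pow, geomSum, mul_geom_sum]

theorem augmentation_geomSum (s : G) (m : ℕ) : augmentation R G (geomSum s m) = m := by
  simp [geomSum]

theorem groupElem_pow_mul_geomSum {s : G} {N : ℕ} (hs : s ^ N = 1) (m : ℕ) :
    groupElem (s ^ m) * geomSum s N = (geomSum s N : MonoidAlgebra R G) := by
  have h : (groupElem s : MonoidAlgebra R G) * geomSum s N = geomSum s N := by
    rw [← sub_eq_zero, ← sub_one_mul, sub_one_mul_geomSum, hs, map_one, sub_self]
  induction m with
  | zero => rw [pow_zero, map_one, one_mul]
  | succ m ih => rw [pow_succ, map_mul, mul_assoc, h, ih]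

section CyclicSubgroup

variable {N : ℕ} {s : G} {z : G → ZMod N}

theorem offset_mul_pow (hz : ∀ g, z (g * s) = z g + 1) (g : G) (m : ℕ) :
    z (g * s ^ m) = z g + m := by
  induction m with
  | zero => simp
  | succ m ih => rw [pow_succ, ← mul_assoc, hz, ih, Nat.cast_succ, add_assoc]

/-- The representative of offset zero of the coset of `g` by the powers of `s`. -/
def cosetRep (s : G) (z : G → ZMod N) (g : G) : G := g * (s ^ (z g).val)⁻¹

/-- Adds up the elements of offsets `0, …, z g - 1` in the coset of a group element `g`. This is
a contracting homotopy of the periodic resolution for the powers of `s`. -/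
noncomputable def partialCosetSum (s : G) (z : G → ZMod N) :
    MonoidAlgebra R G →ₗ[R] MonoidAlgebra R G :=
  linearExtension fun g => groupElem (cosetRep s z g) * geomSum s (z g).val

theorem val_offset_mul_pow (hz : ∀ g, z (g * s) = z g + 1) {g : G} (hg : z g = 0) {m : ℕ}
    (hm : m < N) : (z (g * s ^ m)).val = m := by
  rw [offset_mul_pow hz, hg, zero_add, ZMod.val_natCast_of_lt hm]

theorem cosetRep_mul_pow (hz : ∀ g, z (g * s) = z g + 1) {g : G} (hg : z g = 0) {m : ℕ}
    (hm : m < N) : cosetRep s z (g * s ^ m) = g := by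
  rw [cosetRep, val_offset_mul_pow hz hg hm, mul_inv_cancel_right]

theorem partialCosetSum_groupElem (hz : ∀ g, z (g * s) = z g + 1) {g : G} (hg : z g = 0) {m : ℕ}
    (hm : m < N) : partialCosetSum s z (groupElem (g * s ^ m) : MonoidAlgebra R G) =
      groupElem g * geomSum s m := by
  rw [partialCosetSum, linearExtension_groupElem, cosetRep_mul_pow hz hg hm,
    val_offset_mul_pow hz hg hm]

/-- The part of an element of the group ring supported on the group elements of offset zero. -/
noncomputable def offsetZeroPart (z : G → ZMod N) : MonoidAlgebra R G →ₗ[R] MonoidAlgebra R G :=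
  linearExtension fun g => if z g = 0 then groupElem g else 0

/-- The part of an element of the group ring supported on the group elements of offset `N - 1`,
translated to offset zero. -/
noncomputable def offsetLastPart (s : G) (z : G → ZMod N) :
    MonoidAlgebra R G →ₗ[R] MonoidAlgebra R G :=
  linearExtension fun g => if (z g).val + 1 = N then groupElem (cosetRep s z g) else 0

variable [NeZero N]

theorem exists_eq_mul_pow (hz : ∀ g, z (g * s) = z g + 1) (g : G) :
    ∃ g₀ m, m < N ∧ z g₀ = 0 ∧ g = g₀ * s ^ m := by
  refine ⟨cosetRep s z g, (z g).val, ZMod.val_lt _, ?_, (inv_mul_cancel_right g _).symm⟩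
  have h := offset_mul_pow hz (cosetRep s z g) (z g).val
  rwa [cosetRep, inv_mul_cancel_right, ZMod.natCast_zmod_val, right_eq_add] at h

theorem offsetZeroPart_mul_geomSum (hz : ∀ g, z (g * s) = z g + 1) {g : G} (hg : z g = 0) :
    offsetZeroPart z (groupElem g * geomSum s N : MonoidAlgebra R G) = groupElem g := by
  rw [geomSum, Finset.mul_sum, map_sum, Finset.sum_eq_single_of_mem 0
    (Finset.mem_range.2 (NeZero.pos N))]
  · rw [pow_zero, mul_one, offsetZeroPart, linearExtension_groupElem, if_pos hg]
  · intro i hi hi0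
    rw [← map_pow, ← map_mul groupElem, offsetZeroPart, linearExtension_groupElem, if_neg]
    rwa [← ZMod.val_eq_zero, val_offset_mul_pow hz hg (Finset.mem_range.1 hi)]

theorem partialCosetSum_mul_sub_one_add (hz : ∀ g, z (g * s) = z g + 1) (hs : s ^ N = 1)
    (b : MonoidAlgebra R G) :
    partialCosetSum s z b * (groupElem s - 1) + offsetZeroPart z (b * geomSum s N) = b := by
  suffices h : LinearMap.mulRight R (groupElem s - 1) ∘ₗ partialCosetSum s z +
      offsetZeroPart z ∘ₗ LinearMap.mulRight R (geomSum s N) = LinearMap.id from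
    LinearMap.congr_fun h b
  refine linearMap_ext_groupElem fun g => ?_
  obtain ⟨g₀, m, hm, hg₀, rfl⟩ := exists_eq_mul_pow hz g
  simp only [LinearMap.add_apply, LinearMap.comp_apply, LinearMap.mulRight_apply,
    LinearMap.id_apply]
  rw [partialCosetSum_groupElem hz hg₀ hm, mul_assoc, geomSum_mul_sub_one, map_mul groupElem,
    mul_assoc, groupElem_pow_mul_geomSum hs, offsetZeroPart_mul_geomSum hz hg₀, mul_sub_one,
    sub_add_cancel]

theorem partialCosetSum_mul_sub_one (hz : ∀ g, z (g * s) = z g + 1) (hs : s ^ N = 1)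
    (b : MonoidAlgebra R G) :
    partialCosetSum s z (b * (groupElem s - 1)) + offsetLastPart s z b * geomSum s N = b := by
  suffices h : partialCosetSum s z ∘ₗ LinearMap.mulRight R (groupElem s - 1) +
      LinearMap.mulRight R (geomSum s N) ∘ₗ offsetLastPart s z = LinearMap.id from
    LinearMap.congr_fun h b
  refine linearMap_ext_groupElem fun g => ?_
  obtain ⟨g₀, m, hm, hg₀, rfl⟩ := exists_eq_mul_pow hz g
  simp only [LinearMap.add_apply, LinearMap.comp_apply, LinearMap.mulRight_apply,
    LinearMap.id_apply]
  rw [mul_sub_one, ← map_mul groupElem, mul_assoc, ← pow_succ, map_sub,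
    partialCosetSum_groupElem hz hg₀ hm, offsetLastPart, linearExtension_groupElem,
    cosetRep_mul_pow hz hg₀ hm, val_offset_mul_pow hz hg₀ hm]
  have h_succ : (groupElem g₀ * geomSum s (m + 1) : MonoidAlgebra R G) =
      groupElem g₀ * geomSum s m + groupElem (g₀ * s ^ m) := by
    rw [geomSum_succ, mul_add, map_mul groupElem]
  rcases (Nat.succ_le_of_lt hm).lt_or_eq with hlt | rfl
  · rw [partialCosetSum_groupElem hz hg₀ hlt, if_neg hlt.ne, h_succ, zero_mul, add_zero,
      add_sub_cancel_left]
  · have h₀ := partialCosetSum_groupElem (R := R) hz hg₀ (NeZero.pos (m + 1))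
    rw [hs, ← pow_zero s, h₀, if_pos rfl, h_succ, geomSum_zero, mul_zero, zero_sub,
      neg_add_cancel_left]

theorem exact_mul_sub_one_mul_geomSum (hz : ∀ g, z (g * s) = z g + 1) (hs : s ^ N = 1) :
    Function.Exact (fun b : MonoidAlgebra R G => b * (groupElem s - 1))
      (fun b => b * geomSum s N) := fun b => by
  refine ⟨fun hb => ⟨partialCosetSum s z b, ?_⟩, ?_⟩
  · simpa [hb] using partialCosetSum_mul_sub_one_add hz hs b
  · rintro ⟨c, rfl⟩
    dsimp only
    rw [mul_assoc, sub_one_mul_geomSum, hs, map_one, sub_self, mul_zero]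

theorem exact_mul_geomSum_mul_sub_one (hz : ∀ g, z (g * s) = z g + 1) (hs : s ^ N = 1) :
    Function.Exact (fun b : MonoidAlgebra R G => b * geomSum s N)
      (fun b => b * (groupElem s - 1)) := fun b => by
  refine ⟨fun hb => ⟨offsetLastPart s z b, ?_⟩, ?_⟩
  · simpa [hb] using partialCosetSum_mul_sub_one hz hs b
  · rintro ⟨c, rfl⟩
    dsimp only
    rw [mul_assoc, geomSum_mul_sub_one, hs, map_one, sub_self, mul_zero]

end CyclicSubgroup

end GroupRing

section Diagonal

variable {A κ β : Type*} [Ring A]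

theorem linearCombination_single_apply {e : κ → β} (he : Function.Injective e) (u : κ → A)
    (x : κ →₀ A) (k : κ) :
    Finsupp.linearCombination A (fun k => Finsupp.single (e k) (u k)) x (e k) = x k * u k := by
  classical
  induction x using Finsupp.induction_linear with
  | zero => simp
  | add x y hx hy => simp only [map_add, Finsupp.add_apply, hx, hy, add_mul]
  | single l r =>
    rw [Finsupp.linearCombination_single, Finsupp.smul_single, smul_eq_mul]
    rcases eq_or_ne k l with rfl | hkl
    · rw [Finsupp.single_eq_same, Finsupp.single_eq_same]
    · rw [Finsupp.single_eq_of_ne (he.ne hkl), Finsupp.single_eq_of_ne hkl, zero_mul]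

theorem exact_diagonal [Finite κ] {e : κ → β} (he : Function.Injective e) {u v : κ → A}
    (h : ∀ k, Function.Exact (fun b => b * u k) (fun b => b * v k)) :
    Function.Exact (Finsupp.linearCombination A fun k => Finsupp.single k (u k))
      (Finsupp.linearCombination A fun k => Finsupp.single (e k) (v k)) := fun x => by
  have apply_u := linearCombination_single_apply (e := id) Function.injective_id u
  constructor
  · intro hx
    have hx' : ∀ k, x k * v k = 0 := fun k => by
      rw [← linearCombination_single_apply he, hx, Finsupp.zero_apply]
    choose y hy using fun k => (h k (x k)).1 (hx' k)
    exact ⟨Finsupp.equivFunOnFinite.symm y, Finsupp.ext fun k => (apply_u _ k).trans (hy k)⟩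
  · rintro ⟨y, rfl⟩
    induction y using Finsupp.induction_linear with
    | zero => simp only [map_zero]
    | add y z hy hz => rw [map_add, map_add, hy, hz, add_zero]
    | single k r =>
      have huv : r * u k * v k = 0 := (h k (r * u k)).2 ⟨r, rfl⟩
      rw [Finsupp.linearCombination_single, Finsupp.smul_single,
        Finsupp.linearCombination_single, Finsupp.smul_single, smul_eq_mul, smul_eq_mul, huv,
        Finsupp.single_zero]

end Diagonal

section TrianglePresentations

/-- The relations `s k ^ N = 1` and `s 0 ^ a j 0 * s 1 ^ a j 1 * s 2 ^ a j 2 = 1`. -/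
structure TriangleRelations {G J : Type*} [Group G] (s : Fin 3 → G) (a : J → Fin 3 → ℕ)
    (N : ℕ) : Prop where
  pow_eq_one : ∀ k, s k ^ N = 1
  triangle : ∀ j, s 0 ^ a j 0 * s 1 ^ a j 1 * s 2 ^ a j 2 = 1

/-- The group `G` is presented by the generators `s k` and their `TriangleRelations`. -/
structure IsTrianglePresentation {G J : Type} [Group G] (s : Fin 3 → G) (a : J → Fin 3 → ℕ)
    (N : ℕ) : Prop extends TriangleRelations s a N where
  closure_range : Subgroup.closure (Set.range s) = ⊤
  exists_hom : ∀ {H : Type} [Group H] {t : Fin 3 → H}, TriangleRelations t a N →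
    ∃ φ : G →* H, ∀ k, φ (s k) = t k

/-- The edge following the edge `g` of type `k` in its triangle of index `j`. -/
def nextEdge {G J : Type*} [Group G] (s : Fin 3 → G) (a : J → Fin 3 → ℕ) (k : Fin 3) (j : J)
    (g : G) : G :=
  g * s (k + 1) ^ a j (k + 1)

variable {G J : Type*} [Group G] {s : Fin 3 → G} {a : J → Fin 3 → ℕ} {N : ℕ}

theorem TriangleRelations.triangle_rotate (hs : TriangleRelations s a N) (k : Fin 3) (j : J) :
    s (k + 1) ^ a j (k + 1) * (s (k + 1 + 1) ^ a j (k + 1 + 1) * s k ^ a j k) = 1 := by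
  have rotate {x y z : G} (h : x * (y * z) = 1) : y * (z * x) = 1 := by
    rw [← mul_assoc, mul_eq_one_iff_eq_inv', ← eq_inv_iff_mul_eq_one.2 h]
  have h₂ : s 0 ^ a j 0 * (s 1 ^ a j 1 * s 2 ^ a j 2) = 1 :=
    (mul_assoc _ _ _).symm.trans (hs.triangle j)
  match k with
  | 0 => exact rotate h₂
  | 1 => exact rotate (rotate h₂)
  | 2 => exact h₂

theorem TriangleRelations.nextEdge_nextEdge_nextEdge (hs : TriangleRelations s a N) (k : Fin 3)
    (j : J) (g : G) :
    nextEdge s a (k + 1 + 1) j (nextEdge s a (k + 1) j (nextEdge s a k j g)) = g := by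
  rw [nextEdge, nextEdge, nextEdge, add_one_add_one_add_one, mul_assoc, mul_assoc,
    hs.triangle_rotate, mul_one]

theorem Horofunction.offset_mul_pow (F : Horofunction s N) (k : Fin 3) (g : G) (m : ℕ) :
    F.offset k (g * s k ^ m) = F.offset k g + m :=
  Stmt6.offset_mul_pow (F.offset_mul k) g m

theorem Horofunction.height_mul_pow (F : Horofunction s N) (k : Fin 3) (g : G) (m : ℕ) :
    F.height k (g * s k ^ m) = F.height k g := by
  induction m with
  | zero => rw [pow_zero, mul_one]
  | succ m ih => rw [pow_succ, ← mul_assoc, F.height_mul, ih]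

/-- The climb of a horofunction along an edge. -/
def Horofunction.climb (F : Horofunction s N) (k : Fin 3) (g : G) : ℤ :=
  if F.offset k g = 0 then -2 else 1

theorem Horofunction.height_nextEdge (F : Horofunction s N) (k : Fin 3) (j : J) (g : G) :
    F.height (k + 1) (nextEdge s a k j g) = F.height k g + F.climb k g := by
  rw [nextEdge, F.height_mul_pow, F.height_succ, climb]

theorem Horofunction.climb_add_climb_add_climb (F : Horofunction s N)
    (hs : TriangleRelations s a N) (k : Fin 3) (j : J) (g : G) :
    F.climb k g + F.climb (k + 1) (nextEdge s a k j g) +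
      F.climb (k + 1 + 1) (nextEdge s a (k + 1) j (nextEdge s a k j g)) = 0 := by
  have h := F.height_nextEdge (a := a) (k + 1 + 1) j
    (nextEdge s a (k + 1) j (nextEdge s a k j g))
  rw [hs.nextEdge_nextEdge_nextEdge, add_one_add_one_add_one, F.height_nextEdge,
    F.height_nextEdge] at h
  linarith

theorem Horofunction.nextEdge_index_unique (F : Horofunction s N)
    (ha : ∀ k, Function.Injective fun j => (a j k : ZMod N)) {k : Fin 3} {g : G} {j j' : J}
    (hj : F.offset (k + 1) (nextEdge s a k j g) = 0)
    (hj' : F.offset (k + 1) (nextEdge s a k j' g) = 0) : j = j' := by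
  rw [nextEdge, F.offset_mul_pow] at hj hj'
  exact ha (k + 1) (add_left_cancel (hj.trans hj'.symm))

/-- A finitely supported cycle of triangles: `y k g j` is the coefficient of the triangle of
index `j` on the edge `g` of type `k`, and the coefficients of the triangles on an edge add up to
zero. -/
structure IsTriangleCycle [Fintype J] {M : Type*} [AddCommMonoid M] (s : Fin 3 → G)
    (a : J → Fin 3 → ℕ) (y : Fin 3 → G → J → M) : Prop where
  sum_eq_zero : ∀ k g, ∑ j, y k g j = 0
  apply_nextEdge : ∀ k g j, y (k + 1) (nextEdge s a k j g) j = y k g j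
  finite : {p : Fin 3 × G × J | y p.1 p.2.1 p.2.2 ≠ 0}.Finite

namespace IsTriangleCycle

variable [Fintype J] {M : Type*} [AddCommMonoid M] {y : Fin 3 → G → J → M}

theorem exists_ne (hy : IsTriangleCycle s a y) {k : Fin 3} {g : G} {j : J} (hj : y k g j ≠ 0) :
    ∃ j' ≠ j, y k g j' ≠ 0 := by
  contrapose! hj
  rw [← hy.sum_eq_zero k g, Fintype.sum_eq_single j hj]

theorem exists_climb (hy : IsTriangleCycle s a y) (F : Horofunction s N)
    (hs : TriangleRelations s a N) (ha : ∀ k, Function.Injective fun j => (a j k : ZMod N))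
    {k : Fin 3} {g : G} {j : J} (hj : y k g j ≠ 0)
    (h_offset : F.offset (k + 1) (nextEdge s a k j g) = 0) :
    ∃ g' j', y (k + 1) g' j' ≠ 0 ∧ F.offset (k + 1 + 1) (nextEdge s a (k + 1) j' g') = 0 ∧
      F.height k g < F.height (k + 1) g' := by
  obtain ⟨j', hne, hj'⟩ := hy.exists_ne hj
  have h_triangle := F.climb_add_climb_add_climb hs k j g
  have h_triangle' := F.climb_add_climb_add_climb hs k j' g
  have h_offset' : F.offset (k + 1) (nextEdge s a k j' g) ≠ 0 := fun h =>
    hne (F.nextEdge_index_unique ha h h_offset)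
  refine ⟨nextEdge s a k j' g, j', by rwa [hy.apply_nextEdge], ?_, ?_⟩
  · by_contra h
    grind [Horofunction.climb]
  · rw [F.height_nextEdge]
    grind [Horofunction.climb]

/-- Otherwise, `exists_climb` leads to triangles of the support at ever larger heights. -/
theorem offset_nextEdge_ne_zero (hy : IsTriangleCycle s a y) (F : Horofunction s N)
    (hs : TriangleRelations s a N) (ha : ∀ k, Function.Injective fun j => (a j k : ZMod N))
    {k : Fin 3} {g : G} {j : J} (hj : y k g j ≠ 0) :
    F.offset (k + 1) (nextEdge s a k j g) ≠ 0 := fun h_offset => by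
  let descending : Set (Fin 3 × G × J) :=
    {p | y p.1 p.2.1 p.2.2 ≠ 0 ∧ F.offset (p.1 + 1) (nextEdge s a p.1 p.2.2 p.2.1) = 0}
  obtain ⟨⟨k₀, g₀, j₀⟩, ⟨hj₀, h_offset₀⟩, h_max⟩ :=
    Set.exists_max_image descending (fun p => F.height p.1 p.2.1)
      (hy.finite.subset fun p hp => hp.1) ⟨(k, g, j), hj, h_offset⟩
  obtain ⟨g', j', hj', h_offset', h_lt⟩ := hy.exists_climb F hs ha hj₀ h_offset₀
  exact h_lt.not_ge (h_max (k₀ + 1, g', j') ⟨hj', h_offset'⟩)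

theorem eq_zero (hy : IsTriangleCycle s a y) (F : Horofunction s N)
    (hs : TriangleRelations s a N) (ha : ∀ k, Function.Injective fun j => (a j k : ZMod N)) :
    y = 0 := by
  funext k g j
  by_contra hj
  have climb_nextEdge {k g j} (hj : y k g j ≠ 0) : F.climb (k + 1) (nextEdge s a k j g) = 1 :=
    if_neg (hy.offset_nextEdge_ne_zero F hs ha hj)
  have hj₁ : y (k + 1) (nextEdge s a k j g) j ≠ 0 := by rwa [hy.apply_nextEdge]
  have hj₂ : y (k + 1 + 1) (nextEdge s a (k + 1) j (nextEdge s a k j g)) j ≠ 0 := by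
    rwa [hy.apply_nextEdge]
  have h_climb := climb_nextEdge hj₂
  rw [hs.nextEdge_nextEdge_nextEdge, add_one_add_one_add_one] at h_climb
  have h_triangle := F.climb_add_climb_add_climb hs k j g
  rw [h_climb, climb_nextEdge hj, climb_nextEdge hj₁] at h_triangle
  norm_num at h_triangle

end IsTriangleCycle

end TrianglePresentations

section LatticeResolution

open Finsupp (single linearCombination)

variable {R G J : Type} [CommRing R] [Group G]

/-- The edge of type `k` in the triangle of index `j` on the edge `1` of type `2`. -/
def triangleEdge (s : Fin 3 → G) (a : J → Fin 3 → ℕ) (j : J) : Fin 3 → G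
  | 0 => s 0 ^ a j 0
  | 1 => s 0 ^ a j 0 * s 1 ^ a j 1
  | 2 => 1

/-- The cells of the free resolution of a group with a triangle presentation: in degree zero
the vertices; in degree one the edges (on the left) and the generators of the vertex stabilizers;
in degree two the triangles (on the left) and, as in all higher degrees, the cells of the periodic
resolutions of the vertex stabilizers. -/
@[reducible]
def LatticeCell (J : Type) : ℕ → Type
  | 0 => Fin 3
  | 1 => Fin 3 ⊕ Fin 3
  | 2 => J ⊕ Fin 3
  | _ + 3 => Fin 3

/-- The boundary of the triangle of index `j`. The second summands are the paths in the vertex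
stabilizers that connect consecutive edges of the triangle. -/
noncomputable def triangleBoundary (s : Fin 3 → G) (a : J → Fin 3 → ℕ) (j : J) :
    Fin 3 ⊕ Fin 3 →₀ MonoidAlgebra R G :=
  ∑ k, (single (.inl k) (groupElem (triangleEdge s a j k)) +
    single (.inr (k + 1)) (groupElem (triangleEdge s a j k) * geomSum (s (k + 1)) (a j (k + 1))))

/-- The differentials of the free resolution of a group with a triangle presentation. -/
noncomputable def latticeDiff (s : Fin 3 → G) (a : J → Fin 3 → ℕ) (N : ℕ) :
    ∀ n, LatticeCell J (n + 1) → (LatticeCell J n →₀ MonoidAlgebra R G)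
  | 0, .inl k => single (k + 1) 1 - single k 1
  | 0, .inr k => single k (groupElem (s k) - 1)
  | 1, .inl j => triangleBoundary s a j
  | 1, .inr k => single (.inr k) (geomSum (s k) N)
  | 2, k => single (.inr k) (groupElem (s k) - 1)
  | n + 3, k => single k (if Even n then geomSum (s k) N else groupElem (s k) - 1)

variable {s : Fin 3 → G} {a : J → Fin 3 → ℕ} {N : ℕ}

theorem TriangleRelations.nextEdge_triangleEdge (hs : TriangleRelations s a N) (j : J)
    (k : Fin 3) : nextEdge s a k j (triangleEdge s a j k) = triangleEdge s a j (k + 1) :=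
  match k with
  | 0 => rfl
  | 1 => hs.triangle j
  | 2 => one_mul _

section HigherDegrees

theorem freeDiff_latticeDiff_one_apply_inl [Fintype J] (x : J ⊕ Fin 3 →₀ MonoidAlgebra R G)
    (k : Fin 3) :
    freeDiff (latticeDiff s a N) 1 x (.inl k) =
      ∑ j, x (.inl j) * groupElem (triangleEdge s a j k) := by
  have boundary_apply j : triangleBoundary (R := R) s a j (.inl k) =
      groupElem (triangleEdge s a j k) := by
    simp [triangleBoundary, Finsupp.finsetSum_apply, Finsupp.single_apply]
  rw [Finsupp.linearCombination_apply, Finsupp.sum_fintype _ _ (by simp),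
    Finsupp.finsetSum_apply, Fintype.sum_sum_type]
  simp [latticeDiff, boundary_apply]

theorem isTriangleCycle_of_freeDiff_eq_zero [Fintype J] (hs : TriangleRelations s a N)
    {x : J ⊕ Fin 3 →₀ MonoidAlgebra R G} (hx : freeDiff (latticeDiff s a N) 1 x = 0) :
    IsTriangleCycle s a fun k g j =>
      (x (.inl j) * groupElem (triangleEdge s a j k)).coeff g where
  sum_eq_zero k g := by
    rw [← Finsupp.finsetSum_apply, ← MonoidAlgebra.coeff_sum,
      ← freeDiff_latticeDiff_one_apply_inl (N := N), hx]
    rfl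
  apply_nextEdge k g j := by
    rw [← hs.nextEdge_triangleEdge, nextEdge, nextEdge, map_mul groupElem, ← mul_assoc,
      coeff_mul_groupElem]
  finite := by
    refine (Set.finite_iUnion fun k => Set.finite_iUnion fun j =>
      ((x (.inl j) * groupElem (triangleEdge s a j k)).coeff.support.finite_toSet.image
        fun g => (k, g, j))).subset ?_
    rintro ⟨k, g, j⟩ hp
    exact Set.mem_iUnion₂.2 ⟨k, j, g, Finsupp.mem_support_iff.2 hp, rfl⟩

theorem apply_inl_eq_zero_of_freeDiff_eq_zero [Finite J] (hs : TriangleRelations s a N)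
    (ha : ∀ k, Function.Injective fun j => (a j k : ZMod N)) (F : Horofunction s N)
    {x : J ⊕ Fin 3 →₀ MonoidAlgebra R G} (hx : freeDiff (latticeDiff s a N) 1 x = 0) (j : J) :
    x (.inl j) = 0 := by
  cases nonempty_fintype J
  have h := (isTriangleCycle_of_freeDiff_eq_zero hs hx).eq_zero F hs ha
  rw [← mul_one (x (.inl j)), ← map_one groupElem, ← MonoidAlgebra.coeff_eq_zero]
  exact Finsupp.ext fun g => congr_fun (congr_fun₂ h 2 g) j

variable [NeZero N]

theorem exact_latticeDiff_add_two (hs : TriangleRelations s a N) (F : Horofunction s N) (n : ℕ) :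
    Function.Exact (freeDiff (latticeDiff (R := R) s a N) (n + 3))
      (freeDiff (latticeDiff (R := R) s a N) (n + 2)) := by
  have exact_geomSum k := exact_mul_geomSum_mul_sub_one (R := R) (F.offset_mul k)
    (hs.pow_eq_one k)
  have exact_sub_one k := exact_mul_sub_one_mul_geomSum (R := R) (F.offset_mul k)
    (hs.pow_eq_one k)
  match n with
  | 0 => exact exact_diagonal Sum.inr_injective exact_geomSum
  | n + 1 =>
    refine exact_diagonal (e := id) Function.injective_id fun k => ?_
    rcases Nat.even_or_odd n with h | h
    · simpa only [Nat.even_add_one, h, not_true, if_true, if_false] using exact_sub_one k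
    · simpa only [Nat.even_add_one, Nat.not_even_iff_odd.2 h, not_false_eq_true, if_true,
        if_false] using exact_geomSum k

theorem exact_latticeDiff_one [Finite J] (hs : TriangleRelations s a N)
    (ha : ∀ k, Function.Injective fun j => (a j k : ZMod N)) (F : Horofunction s N) :
    Function.Exact (freeDiff (latticeDiff (R := R) s a N) 2)
      (freeDiff (latticeDiff (R := R) s a N) 1) := by
  let diag : (Fin 3 →₀ MonoidAlgebra R G) →ₗ[MonoidAlgebra R G] (Fin 3 →₀ MonoidAlgebra R G) :=
    linearCombination _ fun k => single k (groupElem (s k) - 1)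
  have h_exact : Function.Exact diag (linearCombination _ fun k =>
      single (.inr k : Fin 3 ⊕ Fin 3) (geomSum (s k) N)) :=
    exact_diagonal Sum.inr_injective fun k =>
      exact_mul_sub_one_mul_geomSum (F.offset_mul k) (hs.pow_eq_one k)
  have diff_two y : freeDiff (latticeDiff s a N) 2 y =
      (diag y).mapDomain (.inr : _ → J ⊕ Fin 3) := by
    have h := Finsupp.apply_linearCombination _
      (Finsupp.lmapDomain (MonoidAlgebra R G) (MonoidAlgebra R G) (.inr : _ → J ⊕ Fin 3))
      (fun k => single k (groupElem (s k) - 1 : MonoidAlgebra R G)) y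
    simp only [Function.comp_def, Finsupp.lmapDomain_apply, Finsupp.mapDomain_single] at h
    exact h.symm
  have diff_one (z : Fin 3 →₀ MonoidAlgebra R G) :
      freeDiff (latticeDiff s a N) 1 (z.mapDomain (.inr : _ → J ⊕ Fin 3)) =
      linearCombination _ (fun k => single (.inr k : Fin 3 ⊕ Fin 3) (geomSum (s k) N)) z :=
    Finsupp.linearCombination_mapDomain _ _ _
  intro x
  constructor
  · intro hx
    have h_range : (x.support : Set (J ⊕ Fin 3)) ⊆ Set.range Sum.inr := by
      rintro (j | k) h
      · exact absurd (apply_inl_eq_zero_of_freeDiff_eq_zero hs ha F hx j)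
          (Finsupp.mem_support_iff.1 h)
      · exact ⟨k, rfl⟩
    have hx' := Finsupp.mapDomain_comapDomain _ Sum.inr_injective x h_range
    rw [← hx', diff_one] at hx
    obtain ⟨y, hy⟩ := (h_exact _).1 hx
    exact ⟨y, by rw [diff_two, hy, hx']⟩
  · rintro ⟨y, rfl⟩
    rw [diff_two, diff_one]
    exact h_exact.apply_apply_eq_zero y

end HigherDegrees

end LatticeResolution

section LowDegrees

open Finsupp (single linearCombination)

variable {R G J : Type} [CommRing R] [Group G]

theorem finsuppLinearMap_ext_groupElem {α V : Type*} [AddCommGroup V] [Module R V]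
    {f f' : (α →₀ MonoidAlgebra R G) →ₗ[R] V}
    (h : ∀ a g, f (single a (groupElem g)) = f' (single a (groupElem g))) : f = f' :=
  Finsupp.lhom_ext' fun a => linearMap_ext_groupElem (h a)

section Modules

variable {M : Type} [AddCommGroup M] [Module (MonoidAlgebra R G) M]

theorem groupElem_smul_groupElem_smul (g h : G) (m : M) :
    (groupElem g : MonoidAlgebra R G) • (groupElem h : MonoidAlgebra R G) • m =
      (groupElem (g * h) : MonoidAlgebra R G) • m := by
  rw [map_mul, mul_smul]

theorem groupElem_smul_eq_self_of_closure {S : Set G} (hS : Subgroup.closure S = ⊤) {u : M}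
    (hu : ∀ s ∈ S, (groupElem s : MonoidAlgebra R G) • u = u) (g : G) :
    (groupElem g : MonoidAlgebra R G) • u = u := by
  induction (hS ▸ Subgroup.mem_top g : g ∈ Subgroup.closure S) using
    Subgroup.closure_induction with
  | mem s hs => exact hu s hs
  | one => rw [map_one, one_smul]
  | mul g h _ _ hg hh => rw [← groupElem_smul_groupElem_smul, hh, hg]
  | inv g _ hg =>
    nth_rw 1 [← hg]
    rw [groupElem_smul_groupElem_smul, inv_mul_cancel, map_one, one_smul]

/-- The action of `G` on the additive group of an `R[G]`-module. -/
noncomputable def groupAut (R G M : Type) [CommRing R] [Group G] [AddCommGroup M]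
    [Module (MonoidAlgebra R G) M] : G →* MulAut (Multiplicative M) :=
  letI := DistribMulAction.compHom M (groupElem : G →* MonoidAlgebra R G)
  (MulAutMultiplicative M).symm.toMonoidHom.comp (DistribMulAction.toAddAut G M)

theorem semidirectProduct_pow (g : G) (m : M) (n : ℕ) :
    (⟨.ofAdd m, g⟩ : Multiplicative M ⋊[groupAut R G M] G) ^ n =
      ⟨.ofAdd ((geomSum g n : MonoidAlgebra R G) • m), g ^ n⟩ := by
  induction n with
  | zero => rw [geomSum_zero, zero_smul, pow_zero, pow_zero]; rfl
  | succ n ih =>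
    rw [pow_succ, ih, geomSum_succ, add_smul, pow_succ]
    rfl

variable {s : Fin 3 → G} {a : J → Fin 3 → ℕ} {N : ℕ}

theorem IsTrianglePresentation.exists_derivation (hP : IsTrianglePresentation s a N)
    {m : Fin 3 → M} (h_pow : ∀ k, (geomSum (s k) N : MonoidAlgebra R G) • m k = 0)
    (h_triangle : ∀ j, ∑ k, (groupElem (triangleEdge s a j k) : MonoidAlgebra R G) •
      (geomSum (s (k + 1)) (a j (k + 1)) : MonoidAlgebra R G) • m (k + 1) = 0) :
    ∃ D : G → M, (∀ g h, D (g * h) = D g + (groupElem g : MonoidAlgebra R G) • D h) ∧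
      ∀ k, D (s k) = m k := by
  let t k : Multiplicative M ⋊[groupAut R G M] G := ⟨.ofAdd (m k), s k⟩
  have ht : TriangleRelations t a N := by
    refine ⟨fun k => ?_, fun j => ?_⟩
    · rw [semidirectProduct_pow, h_pow, hP.pow_eq_one]
      rfl
    · simp only [t, semidirectProduct_pow]
      refine SemidirectProduct.ext (Multiplicative.toAdd.injective ?_) (hP.triangle j)
      refine Eq.trans ?_ (h_triangle j)
      rw [Fin.sum_univ_three, ← add_rotate]
      simp only [triangleEdge, map_one, one_smul]
      rfl
  obtain ⟨φ, hφ⟩ := hP.exists_hom ht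
  have h_right : SemidirectProduct.rightHom.comp φ = MonoidHom.id G := by
    refine MonoidHom.eq_of_eqOn_dense hP.closure_range ?_
    rintro _ ⟨k, rfl⟩
    rw [MonoidHom.comp_apply, hφ, MonoidHom.id_apply]
    rfl
  refine ⟨fun g => Multiplicative.toAdd (φ g).left, fun g h => ?_, fun k => ?_⟩
  · have h_right_g : (φ g).right = g := DFunLike.congr_fun h_right g
    simp only [map_mul, SemidirectProduct.mul_left, h_right_g]
    rfl
  · simp only [hφ]
    rfl

end Modules

variable {s : Fin 3 → G} {a : J → Fin 3 → ℕ} {N : ℕ}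

section CellularCochains

variable {M : Type} [AddCommGroup M] [Module (MonoidAlgebra R G) M] {e c : Fin 3 → M}

theorem geomSum_smul_edge (s : G) (n : ℕ) (p c : M) :
    (geomSum s n : MonoidAlgebra R G) • (p + c - (groupElem s : MonoidAlgebra R G) • p) =
      p + (geomSum s n : MonoidAlgebra R G) • c - (groupElem (s ^ n) : MonoidAlgebra R G) • p := by
  have h := congrArg (· • p) (geomSum_mul_sub_one (R := R) s n)
  simp only [mul_smul, sub_smul, one_smul, smul_sub] at h
  rw [smul_sub, smul_add, add_sub_right_comm, ← neg_sub, h]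
  abel

theorem TriangleRelations.sum_triangleEdge_smul (hs : TriangleRelations s a N)
    (p c : Fin 3 → M) (j : J) :
    ∑ k, (groupElem (triangleEdge s a j k) : MonoidAlgebra R G) •
      (geomSum (s (k + 1)) (a j (k + 1)) : MonoidAlgebra R G) •
        (p (k + 1) + c (k + 1) - (groupElem (s (k + 1)) : MonoidAlgebra R G) • p (k + 1)) =
    ∑ k, (groupElem (triangleEdge s a j k) : MonoidAlgebra R G) •
      (p (k + 1) - p k + (geomSum (s (k + 1)) (a j (k + 1)) : MonoidAlgebra R G) • c (k + 1)) := by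
  have h_shift := Equiv.sum_comp (Equiv.addRight (1 : Fin 3)) fun k =>
    (groupElem (triangleEdge s a j k) : MonoidAlgebra R G) • p k
  rw [← sub_eq_zero, ← Finset.sum_sub_distrib, ← sub_eq_zero.2 h_shift.symm,
    ← Finset.sum_sub_distrib]
  refine Finset.sum_congr rfl fun k _ => ?_
  rw [geomSum_smul_edge, Equiv.coe_addRight, ← hs.nextEdge_triangleEdge, nextEdge, map_mul,
    mul_smul]
  simp only [smul_sub, smul_add]
  abel

/-- A cocycle on the cells of degree one, with values `e k` on the edges and `c k` on the
generators of the vertex stabilizers, is the coboundary of a map on the vertices. -/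
theorem IsTrianglePresentation.exists_potential (hP : IsTrianglePresentation s a N) {j₀ : J}
    (hj₀ : ∀ k, a j₀ k = 0) (h_pow : ∀ k, (geomSum (s k) N : MonoidAlgebra R G) • c k = 0)
    (h_triangle : ∀ j, ∑ k, (groupElem (triangleEdge s a j k) : MonoidAlgebra R G) •
      (e k + (geomSum (s (k + 1)) (a j (k + 1)) : MonoidAlgebra R G) • c (k + 1)) = 0) :
    ∃ P : Fin 3 → G → M,
      (∀ k g, P (k + 1) g - P k g = (groupElem g : MonoidAlgebra R G) • e k) ∧
      ∀ k g, P k (g * s k) - P k g = (groupElem g : MonoidAlgebra R G) • c k := by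
  have h_sum : e 0 + e 1 + e 2 = 0 := by
    simpa [Fin.sum_univ_three, triangleEdge, hj₀] using h_triangle j₀
  let p : Fin 3 → M := ![0, e 0, e 0 + e 1]
  have hp k : e k = p (k + 1) - p k :=
    match k with
    | 0 => (sub_zero _).symm
    | 1 => (add_sub_cancel_left _ _).symm
    | 2 => by rw [eq_neg_of_add_eq_zero_right h_sum]; exact (zero_sub _).symm
  obtain ⟨D, D_mul, D_gen⟩ := hP.exists_derivation (R := R) (M := M)
    (m := fun k => p k + c k - (groupElem (s k) : MonoidAlgebra R G) • p k) (fun k => by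
      rw [geomSum_smul_edge, h_pow, hP.pow_eq_one, map_one, one_smul, add_zero, sub_self])
    (fun j => by rw [hP.sum_triangleEdge_smul, ← h_triangle j]; simp only [hp])
  refine ⟨fun k g => D g + (groupElem g : MonoidAlgebra R G) • p k, fun k g => ?_, fun k g => ?_⟩
  · rw [hp, smul_sub, add_sub_add_left_eq_sub]
  · simp only [D_mul, D_gen, map_mul, mul_smul, smul_sub, smul_add]
    abel

end CellularCochains

theorem mkQ_range_freeDiff {α : ℕ → Type*} (d : ∀ n, α (n + 1) → (α n →₀ MonoidAlgebra R G))
    (n : ℕ) (b : α (n + 1)) : (LinearMap.range (freeDiff d n)).mkQ (d n b) = 0 := by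
  rw [Submodule.mkQ_apply, Submodule.Quotient.mk_eq_zero]
  exact ⟨single b 1, by rw [Finsupp.linearCombination_single, one_smul]⟩

theorem map_single_eq_smul {α M : Type*} [AddCommGroup M] [Module (MonoidAlgebra R G) M]
    (f : (α →₀ MonoidAlgebra R G) →ₗ[MonoidAlgebra R G] M) (b : α) (z : MonoidAlgebra R G) :
    f (single b z) = z • f (single b 1) := by
  rw [← map_smul, Finsupp.smul_single, smul_eq_mul, mul_one]

theorem freeDiff_triangleBoundary_eq_zero (hs : TriangleRelations s a N) (j : J) :
    freeDiff (latticeDiff (R := R) s a N) 0 (triangleBoundary s a j) = 0 := by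
  have h_shift := Equiv.sum_comp (Equiv.addRight (1 : Fin 3)) fun k =>
    (single k (groupElem (triangleEdge s a j k)) : Fin 3 →₀ MonoidAlgebra R G)
  rw [triangleBoundary, map_sum, ← sub_eq_zero.2 h_shift, ← Finset.sum_sub_distrib]
  refine Finset.sum_congr rfl fun k _ => ?_
  rw [map_add, Finsupp.linearCombination_single, Finsupp.linearCombination_single,
    Equiv.coe_addRight, ← hs.nextEdge_triangleEdge, nextEdge, map_mul]
  simp only [latticeDiff, smul_sub, Finsupp.smul_single, smul_eq_mul, mul_assoc,
    geomSum_mul_sub_one, mul_one]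
  rw [mul_sub, mul_one, Finsupp.single_sub]
  abel

theorem freeDiff_latticeDiff_zero_one (hs : TriangleRelations s a N)
    (b : LatticeCell J 2) :
    freeDiff (latticeDiff (R := R) s a N) 0 (latticeDiff s a N 1 b) = 0 := by
  match b with
  | .inl j => exact freeDiff_triangleBoundary_eq_zero hs j
  | .inr k =>
    rw [latticeDiff, Finsupp.linearCombination_single, latticeDiff, Finsupp.smul_single,
      smul_eq_mul, geomSum_mul_sub_one, hs.pow_eq_one, map_one, sub_self, Finsupp.single_zero]

/-- A contraction of the complex in degree zero, up to the boundaries in degree one. -/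
theorem IsTrianglePresentation.exists_comp_freeDiff_eq_mkQ (hP : IsTrianglePresentation s a N)
    {j₀ : J} (hj₀ : ∀ k, a j₀ k = 0) :
    ∃ S : (Fin 3 →₀ MonoidAlgebra R G) →ₗ[R]
        (Fin 3 ⊕ Fin 3 →₀ MonoidAlgebra R G) ⧸ LinearMap.range (freeDiff (latticeDiff s a N) 1),
      ∀ x, S (freeDiff (latticeDiff s a N) 0 x) =
        (LinearMap.range (freeDiff (latticeDiff s a N) 1)).mkQ x := by
  let π := (LinearMap.range (freeDiff (latticeDiff (R := R) s a N) 1)).mkQ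
  have hπ (b) : π (latticeDiff s a N 1 b) = 0 := mkQ_range_freeDiff (latticeDiff s a N) 1 b
  obtain ⟨P, P_edge, P_stab⟩ := hP.exists_potential (R := R) hj₀
    (e := fun k => π (single (.inl k) 1)) (c := fun k => π (single (.inr k) 1))
    (fun k => by rw [← map_single_eq_smul]; exact hπ (.inr k))
    (fun j => by
      rw [← hπ (.inl j), latticeDiff, triangleBoundary, map_sum]
      simp only [map_add, smul_add, ← map_smul, Finsupp.smul_single, smul_eq_mul, mul_one])
  let S : (Fin 3 →₀ MonoidAlgebra R G) →ₗ[R] _ :=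
    Finsupp.lsum R fun k => linearExtension (R := R) (P k)
  have S_single k g : S (single k (groupElem g)) = P k g := by
    rw [Finsupp.lsum_single, linearExtension_groupElem]
  have h_factor : S ∘ₗ (freeDiff (latticeDiff s a N) 0).restrictScalars R =
      π.restrictScalars R := by
    refine finsuppLinearMap_ext_groupElem fun b g => ?_
    match b with
    | .inl k =>
      simp [latticeDiff, smul_sub, S_single, P_edge, map_single_eq_smul π (.inl k) (groupElem g)]
    | .inr k =>
      simp [latticeDiff, smul_sub, ← map_mul, S_single, P_stab,
        map_single_eq_smul π (.inr k) (groupElem g)]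
  exact ⟨S, LinearMap.congr_fun h_factor⟩

theorem IsTrianglePresentation.exact_latticeDiff_zero (hP : IsTrianglePresentation s a N) {j₀ : J}
    (hj₀ : ∀ k, a j₀ k = 0) :
    Function.Exact (freeDiff (latticeDiff (R := R) s a N) 1)
      (freeDiff (latticeDiff (R := R) s a N) 0) := by
  obtain ⟨S, hS⟩ := hP.exists_comp_freeDiff_eq_mkQ (R := R) hj₀
  intro x
  constructor
  · intro hx
    have h := hS x
    rw [hx, map_zero, eq_comm] at h
    exact (Submodule.Quotient.mk_eq_zero _).1 h
  · rintro ⟨y, rfl⟩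
    have h : freeDiff (latticeDiff (R := R) s a N) 0 ∘ₗ freeDiff (latticeDiff s a N) 1 = 0 :=
      Finsupp.lhom_ext' fun b => LinearMap.ext_ring (by
        simpa using freeDiff_latticeDiff_zero_one hP.toTriangleRelations b)
    exact LinearMap.congr_fun h y

theorem surjective_totalAugmentation {α : Type*} [Nonempty α] :
    Function.Surjective (totalAugmentation R G α) := fun r =>
  ⟨single (Classical.arbitrary α) (MonoidAlgebra.single 1 r), by simp⟩

theorem totalAugmentation_freeDiff_latticeDiff (x : Fin 3 ⊕ Fin 3 →₀ MonoidAlgebra R G) :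
    totalAugmentation R G (Fin 3) (freeDiff (latticeDiff s a N) 0 x) = 0 := by
  have h : totalAugmentation R G (Fin 3) ∘ₗ (freeDiff (latticeDiff s a N) 0).restrictScalars R =
      0 := by
    refine finsuppLinearMap_ext_groupElem fun b g => ?_
    match b with
    | .inl k => simp [latticeDiff, smul_sub]
    | .inr k => simp [latticeDiff, smul_sub, ← map_mul]
  exact LinearMap.congr_fun h x

theorem IsTrianglePresentation.mkQ_range_freeDiff_single (hP : IsTrianglePresentation s a N)
    (k : Fin 3) (g : G) :
    (LinearMap.range (freeDiff (latticeDiff (R := R) s a N) 0)).mkQ (single k (groupElem g)) =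
      (LinearMap.range (freeDiff (latticeDiff (R := R) s a N) 0)).mkQ (single 0 1) := by
  set π := (LinearMap.range (freeDiff (latticeDiff (R := R) s a N) 0)).mkQ
  have hπ (b) : π (latticeDiff s a N 0 b) = 0 := mkQ_range_freeDiff (latticeDiff s a N) 0 b
  have h_edge k : π (single (k + 1) 1) = π (single k 1) :=
    sub_eq_zero.1 ((map_sub π _ _).symm.trans (hπ (.inl k)))
  have h_vertex k : π (single k 1) = π (single 0 1) :=
    match k with
    | 0 => rfl
    | 1 => h_edge 0
    | 2 => (h_edge 1).trans (h_edge 0)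
  have h_stab k : (groupElem (s k) : MonoidAlgebra R G) • π (single 0 1) = π (single 0 1) := by
    rw [← h_vertex k, ← map_single_eq_smul, ← sub_eq_zero, ← map_sub, ← Finsupp.single_sub]
    exact hπ (.inr k)
  rw [map_single_eq_smul, h_vertex]
  exact groupElem_smul_eq_self_of_closure hP.closure_range (Set.forall_mem_range.2 h_stab) g

theorem IsTrianglePresentation.exact_totalAugmentation (hP : IsTrianglePresentation s a N) :
    Function.Exact (freeDiff (latticeDiff (R := R) s a N) 0) (totalAugmentation R G (Fin 3)) := by
  intro x
  constructor
  · intro hx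
    let π := (LinearMap.range (freeDiff (latticeDiff (R := R) s a N) 0)).mkQ
    have h_factor : π.restrictScalars R =
        (LinearMap.toSpanSingleton R _ (π (single 0 1))) ∘ₗ totalAugmentation R G (Fin 3) :=
      finsuppLinearMap_ext_groupElem fun k g => by
        simpa [π] using hP.mkQ_range_freeDiff_single k g
    have h := LinearMap.congr_fun h_factor x
    rw [LinearMap.comp_apply, hx, map_zero] at h
    exact (Submodule.Quotient.mk_eq_zero _).1 h
  · rintro ⟨y, rfl⟩
    exact totalAugmentation_freeDiff_latticeDiff y

theorem IsTrianglePresentation.isFreeResolution_latticeDiff [Finite J] [NeZero N]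
    (hP : IsTrianglePresentation s a N) (F : Horofunction s N)
    (ha : ∀ k, Function.Injective fun j => (a j k : ZMod N)) {j₀ : J} (hj₀ : ∀ k, a j₀ k = 0) :
    IsFreeResolution (latticeDiff (R := R) s a N) where
  surjective := surjective_totalAugmentation (α := Fin 3)
  exact_zero := hP.exact_totalAugmentation
  exact_succ
    | 0 => hP.exact_latticeDiff_zero hj₀
    | 1 => exact_latticeDiff_one hP.toTriangleRelations ha F
    | n + 2 => exact_latticeDiff_add_two hP.toTriangleRelations F n

end LowDegrees

section DifferenceFamilies

variable {J : Type} {N : ℕ} {δ : Fin 3 → J → ZMod N}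

/-- The exponents of the triangle relations given by three families in `ZMod N`, as natural
numbers. -/
def exponents (δ : Fin 3 → J → ZMod N) (j : J) (k : Fin 3) : ℕ := (δ k j).val

variable [NeZero N]

@[simp]
theorem natCast_exponents (j : J) (k : Fin 3) : (exponents δ j k : ZMod N) = δ k j :=
  ZMod.natCast_zmod_val _

theorem ofAdd_eq_pow_exponents (j : J) (k : Fin 3) :
    Multiplicative.ofAdd (δ k j) = .ofAdd 1 ^ exponents δ j k := by
  rw [← ofAdd_nsmul, nsmul_one, natCast_exponents]

theorem IsTrianglePresentation.nonempty_horofunction {G : Type} [Group G] {s : Fin 3 → G}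
    (hP : IsTrianglePresentation s (exponents δ) N) (hδ : ∀ k, IsDifferenceFamily (δ k)) {o : J}
    (h_base : ∀ k, δ k o = 0) (h_proper : ∀ k, ¬ Function.Surjective (δ k)) :
    Nonempty (Horofunction s N) := by
  obtain ⟨φ, hφ⟩ := hP.exists_hom (t := fun k => rotateHom hδ h_base k (.ofAdd 1))
    { pow_eq_one k := by
        rw [← map_pow, ← ofAdd_nsmul, nsmul_one, ZMod.natCast_self, ofAdd_zero, map_one]
      triangle j := by
        simp only [← map_pow, ← ofAdd_eq_pow_exponents]
        exact rotateHom_triangle hδ h_base j }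
  choose c hc using fun k => not_forall.1 (h_proper k)
  exact ⟨horofunctionOfAction hδ h_base φ hφ
    ⟨(fun n => c (Fin.ofNat 3 (0 + n)), 0), fun _ i h => hc _ ⟨i, h.symm⟩⟩⟩

end DifferenceFamilies

section SingerPresentation

variable {q : ℕ}

theorem IsPlanarDifferenceSet.isDifferenceFamily {f : Fin (q + 1) → ZMod (q ^ 2 + q + 1)}
    (hf : IsPlanarDifferenceSet q (Set.range f)) : IsDifferenceFamily f := by
  have h_inj : Function.Injective f :=
    Set.injOn_univ.1 <| Set.injOn_of_ncard_image_eq (s := Set.univ) <| by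
      rw [Set.image_univ, hf.1, Set.ncard_univ, Nat.card_fin]
  refine ⟨h_inj, fun x hx => ?_, fun {i j k l} hij h_sub => ?_⟩
  · obtain ⟨⟨_, _⟩, ⟨⟨⟨i, rfl⟩, j, rfl⟩, hij⟩, -⟩ := hf.2 x hx
    exact ⟨i, j, hij⟩
  · have h := (hf.2 _ (sub_ne_zero.2 (h_inj.ne hij))).unique (y₁ := (f i, f j))
      (y₂ := (f k, f l)) ⟨⟨⟨i, rfl⟩, j, rfl⟩, rfl⟩ ⟨⟨⟨k, rfl⟩, l, rfl⟩, h_sub.symm⟩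
    exact ⟨h_inj (congrArg Prod.fst h), h_inj (congrArg Prod.snd h)⟩

theorem not_surjective_of_pos (hq : 0 < q) (f : Fin (q + 1) → ZMod (q ^ 2 + q + 1)) :
    ¬ Function.Surjective f := fun hf => by
  have h := Fintype.card_le_of_surjective f hf
  rw [ZMod.card, Fintype.card_fin] at h
  nlinarith

variable (δ : Fin 3 → Fin (q + 1) → ZMod (q ^ 2 + q + 1))

/-- The generators `σ₁, σ₂, σ₃` of the lattice. -/
def generator (k : Fin 3) : SingerLattice q δ := PresentedGroup.of k

theorem isTrianglePresentation_generator :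
    IsTrianglePresentation (generator δ) (exponents δ) (q ^ 2 + q + 1) where
  pow_eq_one k :=
    PresentedGroup.one_of_mem (rels := singerRels q δ) (x := .of k ^ (q ^ 2 + q + 1))
      (.inl ⟨k, rfl⟩)
  triangle j :=
    PresentedGroup.one_of_mem (rels := singerRels q δ)
      (x := .of 0 ^ (δ 0 j).val * .of 1 ^ (δ 1 j).val * .of 2 ^ (δ 2 j).val) (.inr ⟨j, rfl⟩)
  closure_range := PresentedGroup.closure_range_of (singerRels q δ)
  exists_hom {H _ t} ht := by
    have h_rels : ∀ r ∈ singerRels q δ, FreeGroup.lift t r = 1 := by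
      rintro _ (⟨k, rfl⟩ | ⟨j, rfl⟩)
      · rw [map_pow, FreeGroup.lift_apply_of, ht.pow_eq_one]
      · simp only [map_mul, map_pow, FreeGroup.lift_apply_of]
        exact ht.triangle j
    exact ⟨PresentedGroup.toGroup h_rels, fun _ => PresentedGroup.toGroup.of h_rels⟩

variable {δ}

theorem isFreeResolution_singerLattice (R : Type) [CommRing R] (hq : 0 < q)
    (h0 : ∀ i, δ i 0 = 0) (hpds : ∀ i, IsPlanarDifferenceSet q (Set.range (δ i))) :
    IsFreeResolution
      (latticeDiff (R := R) (generator δ) (exponents δ) (q ^ 2 + q + 1)) := by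
  have hP := isTrianglePresentation_generator δ
  have hδ k := (hpds k).isDifferenceFamily
  obtain ⟨F⟩ := hP.nonempty_horofunction hδ h0 fun k => not_surjective_of_pos hq (δ k)
  refine hP.isFreeResolution_latticeDiff F (fun k => ?_) (j₀ := 0) fun k => ?_
  · simpa using (hδ k).injective
  · rw [exponents, h0, ZMod.val_zero]

end SingerPresentation

section LatticeCoinvariants

open MonoidAlgebra

variable {R G J : Type} [CommRing R] [Group G]

theorem coinvDiff_apply {α : ℕ → Type*} (d : ∀ n, α (n + 1) → (α n →₀ MonoidAlgebra R G)) (n : ℕ)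
    [Fintype (α (n + 1))] (x : α (n + 1) →₀ R) (b : α n) :
    coinvDiff d n x b = ∑ a, x a * augmentation R G (d n a b) := by
  rw [coinvDiff, Finsupp.linearCombination_apply, Finsupp.sum_fintype _ _ (by simp),
    Finsupp.finsetSum_apply]
  rfl

variable (s : Fin 3 → G) (a : J → Fin 3 → ℕ) (N : ℕ)

theorem coinvDiff_latticeDiff_zero (x : Fin 3 ⊕ Fin 3 →₀ R) (k : Fin 3) :
    (coinvDiff (latticeDiff s a N) 0 x : Fin 3 →₀ R) (k + 1) = x (.inl k) - x (.inl (k + 1)) := by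
  have h := coinvDiff_apply (latticeDiff s a N) 0 x (k + 1)
  refine h.trans ?_
  simp only [Fintype.sum_sum_type, latticeDiff, Finsupp.single_apply, Finsupp.sub_apply, map_sub,
    apply_ite (augmentation R G), map_one, map_zero, add_left_inj, augmentation_groupElem,
    sub_self, ite_self, mul_zero, Finset.sum_const_zero, add_zero, mul_sub, mul_ite, mul_one,
    Finset.sum_sub_distrib, Finset.sum_ite_eq', Finset.mem_univ, if_true]

theorem augmentation_triangleBoundary_inl (j : J) (k : Fin 3) :
    augmentation R G (triangleBoundary s a j (.inl k)) = 1 := by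
  simp [triangleBoundary, Finsupp.finsetSum_apply, Finsupp.single_apply]

theorem augmentation_triangleBoundary_inr (j : J) (k : Fin 3) :
    augmentation R G (triangleBoundary s a j (.inr k)) = a j k := by
  obtain ⟨k, rfl⟩ := add_left_surjective (1 : Fin 3) k
  simp [triangleBoundary, Finsupp.finsetSum_apply, Finsupp.single_apply, augmentation_geomSum,
    add_comm (1 : Fin 3)]

theorem coinvDiff_latticeDiff_one_inl [Fintype J] (x : J ⊕ Fin 3 →₀ R) (k : Fin 3) :
    (coinvDiff (latticeDiff s a N) 1 x : Fin 3 ⊕ Fin 3 →₀ R) (.inl k) = ∑ j, x (.inl j) := by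
  refine (coinvDiff_apply (latticeDiff s a N) 1 x _).trans ?_
  simp [latticeDiff, augmentation_triangleBoundary_inl]

theorem coinvDiff_latticeDiff_one_inr [Fintype J] (x : J ⊕ Fin 3 →₀ R) (k : Fin 3) :
    (coinvDiff (latticeDiff s a N) 1 x : Fin 3 ⊕ Fin 3 →₀ R) (.inr k) =
      ∑ j, x (.inl j) * a j k + x (.inr k) * N := by
  refine (coinvDiff_apply (latticeDiff s a N) 1 x _).trans ?_
  simp [latticeDiff, augmentation_triangleBoundary_inr, Finsupp.single_apply,
    apply_ite (augmentation R G), augmentation_geomSum]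

theorem coinvDiff_latticeDiff_two : coinvDiff (latticeDiff (R := R) s a N) 2 = 0 :=
  Finsupp.lhom_ext' fun k => LinearMap.ext_ring <| by
    simp [coinvDiff, latticeDiff]

theorem coinvDiff_latticeDiff_add_three (n : ℕ) :
    coinvDiff (latticeDiff (R := R) s a N) (n + 3) =
      (if Even n then (N : R) else 0) • LinearMap.id :=
  Finsupp.lhom_ext' fun k => LinearMap.ext_ring <| by
    split_ifs with h <;> simp [coinvDiff, latticeDiff, h, augmentation_geomSum]

theorem coinvDiff_latticeDiff_add_two_of_even {n : ℕ} (hn : Even n) :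
    coinvDiff (latticeDiff (R := R) s a N) (n + 2) = 0 :=
  match n with
  | 0 => coinvDiff_latticeDiff_two s a N
  | n + 1 => by
    have h_odd := Nat.even_add_one.1 hn
    rw [show n + 1 + 2 = n + 3 from rfl, coinvDiff_latticeDiff_add_three, if_neg h_odd, zero_smul]

end LatticeCoinvariants

section FreeModules

theorem nonempty_linearEquiv_of_injective {R M M' : Type*} [CommRing R] [IsDomain R]
    [IsPrincipalIdealRing R] [AddCommGroup M] [Module R M] [AddCommGroup M'] [Module R M']
    [Module.Finite R M'] [Module.Free R M'] {f : M →ₗ[R] M'} (hf : Function.Injective f)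
    {g : M' →ₗ[R] M} (hg : Function.Injective g) : Nonempty (M ≃ₗ[R] M') := by
  have : Module.Finite R M := .of_injective f hf
  have : Module.Free R M :=
    .of_equiv (LinearEquiv.ofInjective f hf).symm
  exact ⟨.ofFinrankEq M M' (le_antisymm (LinearMap.finrank_le_finrank_of_injective hf)
    (LinearMap.finrank_le_finrank_of_injective hg))⟩

/-- The coordinatewise reduction modulo `N`. -/
noncomputable def reduceMod (α : Type*) (N : ℕ) : (α →₀ ℤ) →ₗ[ℤ] (α → ZMod N) :=
  LinearMap.pi fun i => (Int.castAddHom (ZMod N)).toIntLinearMap ∘ₗ Finsupp.lapply i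

@[simp]
theorem reduceMod_apply {α : Type*} (N : ℕ) (x : α →₀ ℤ) (i : α) :
    reduceMod α N x i = (x i : ZMod N) := rfl

theorem reduceMod_surjective (α : Type*) [Finite α] (N : ℕ) :
    Function.Surjective (reduceMod α N) := fun v => by
  choose y hy using fun i => ZMod.intCast_surjective (v i)
  exact ⟨Finsupp.equivFunOnFinite.symm y, funext hy⟩

theorem reduceMod_eq_zero_iff {α : Type*} {N : ℕ} {x : α →₀ ℤ} :
    reduceMod α N x = 0 ↔ ∃ y : α →₀ ℤ, (N : ℤ) • y = x := by
  simp only [funext_iff, reduceMod_apply, Pi.zero_apply, ZMod.intCast_zmod_eq_zero_iff_dvd]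
  constructor
  · intro h
    exact ⟨x.mapRange (· / N) (Int.zero_ediv _), Finsupp.ext fun i => Int.mul_ediv_cancel' (h i)⟩
  · rintro ⟨y, rfl⟩ i
    exact dvd_mul_right _ _

end FreeModules

section Duality

theorem dualAnnihilator_range_vecMulLinear {R m n : Type*} [CommRing R] [Fintype m] [Fintype n]
    [DecidableEq n] (A : Matrix m n R) :
    (LinearMap.range A.vecMulLinear).dualAnnihilator =
      (LinearMap.ker A.mulVecLin).map (dotProductEquiv R n).toLinearMap := by
  ext φ
  obtain ⟨x, rfl⟩ := (dotProductEquiv R n).surjective φ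
  have h_dot (v : m → R) : dotProductEquiv R n x (A.vecMulLinear v) = A.mulVec x ⬝ᵥ v := by
    rw [dotProductEquiv_apply_apply, Matrix.vecMulLinear_apply, dotProduct_comm,
      ← Matrix.dotProduct_mulVec, dotProduct_comm]
  rw [Submodule.mem_dualAnnihilator, Submodule.mem_map_equiv, LinearEquiv.symm_apply_apply,
    LinearMap.mem_ker, Matrix.mulVecLin_apply]
  simp only [LinearMap.mem_range, forall_exists_index, forall_apply_eq_imp_iff, h_dot]
  exact dotProduct_eq_zero_iff

variable {N : ℕ}

theorem hasEnoughRootsOfUnity_multiplicative_zmod :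
    HasEnoughRootsOfUnity (Multiplicative (ZMod N)) N where
  prim := ⟨Multiplicative.ofAdd 1, by
    rw [IsPrimitiveRoot.iff_orderOf, orderOf_ofAdd_eq_addOrderOf, ZMod.addOrderOf_one]⟩
  cyc := by
    have : IsCyclic (Multiplicative (ZMod N))ˣ :=
      isCyclic_of_surjective (toUnits : Multiplicative (ZMod N) ≃* _).toMonoidHom
        (toUnits : Multiplicative (ZMod N) ≃* _).surjective
    infer_instance

theorem exponent_multiplicative_dvd (B : Type*) [AddCommGroup B] [Module (ZMod N) B] :
    Monoid.exponent (Multiplicative B) ∣ N :=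
  Monoid.exponent_dvd_of_forall_pow_eq_one fun b => Multiplicative.toAdd.injective <| by
    rw [toAdd_pow, toAdd_one, ← Nat.cast_smul_eq_nsmul (ZMod N), ZMod.natCast_self, zero_smul]

/-- The dual of a `ZMod N`-module `B` is the character group of `B` with values in `ZMod N`. -/
def dualEquivMonoidHomUnits (B : Type*) [AddCommGroup B] [Module (ZMod N) B] :
    Module.Dual (ZMod N) B ≃+ Additive (Multiplicative B →* (Multiplicative (ZMod N))ˣ) :=
  (AddMonoidHom.toZModLinearMapEquiv N).symm.trans
    { toEquiv := AddMonoidHom.toMultiplicative.trans <|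
        (MulEquiv.monoidHomCongrRight toUnits).toEquiv.trans Additive.ofMul
      map_add' := fun f g => by
        apply Additive.toMul.injective
        ext
        rfl }

variable [NeZero N]

theorem nonempty_linearEquiv_dual (B : Type*) [AddCommGroup B] [Module (ZMod N) B] [Finite B] :
    Nonempty (B ≃ₗ[ZMod N] Module.Dual (ZMod N) B) := by
  have := hasEnoughRootsOfUnity_multiplicative_zmod (N := N)
  have := HasEnoughRootsOfUnity.of_dvd (Multiplicative (ZMod N))
    (exponent_multiplicative_dvd (N := N) B)
  obtain ⟨e⟩ := CommGroup.monoidHom_mulEquiv_of_hasEnoughRootsOfUnity (Multiplicative B)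
    (Multiplicative (ZMod N))
  let dualEquiv : B ≃+ Module.Dual (ZMod N) B :=
    ((dualEquivMonoidHomUnits (N := N) B).trans
      (e.toAdditive.trans (AddEquiv.additiveMultiplicative B))).symm
  exact ⟨{ dualEquiv with map_smul' := ZMod.map_smul dualEquiv }⟩

/-- A finite quotient is isomorphic to its dual, which for the cokernel of `Aᵀ` is the kernel
of `A`. -/
theorem nonempty_quotient_range_vecMulLinear_equiv_ker {m n : Type*} [Fintype m] [Fintype n]
    (A : Matrix m n (ZMod N)) :
    Nonempty (((n → ZMod N) ⧸ LinearMap.range A.vecMulLinear) ≃ₗ[ZMod N]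
      LinearMap.ker A.mulVecLin) := by
  classical
  obtain ⟨e⟩ := nonempty_linearEquiv_dual (N := N)
    ((n → ZMod N) ⧸ LinearMap.range A.vecMulLinear)
  exact ⟨e ≪≫ₗ Submodule.dualQuotEquivDualAnnihilator _ ≪≫ₗ
    LinearEquiv.ofEq _ _ (dualAnnihilator_range_vecMulLinear A) ≪≫ₗ
    ((dotProductEquiv (ZMod N) n).submoduleMap _).symm⟩

end Duality

section HomologyComputation

/-- The constant coefficient `R` in degree zero, for any group. -/
noncomputable def barHomologyZeroEquiv (R G : Type) [CommRing R] [Group G] :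
    barHomology R G 0 ≃ₗ[R] R :=
  have barDiff_zero : barDiff R G 0 = 0 :=
    Finsupp.lhom_ext' fun g => LinearMap.ext_ring <| by
      simp [barDiff, Subsingleton.elim (fun j : Fin 0 => g j.succ) fun j => g j.castSucc]
  let e : ((Fin 0 → G) →₀ R) ≃ₗ[R] R := Finsupp.uniqueLinearEquiv R R default
  mapMkQEquivOfSurjective (barBoundaries R G 0) (barCycles R G 0)
    (e.toLinearMap ∘ₗ Submodule.subtype _)
    (e.surjective.comp fun x => ⟨⟨x, Submodule.mem_top⟩, rfl⟩) fun z => by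
      rw [barBoundaries, barDiff_zero, LinearMap.range_zero, Submodule.mem_bot]
      exact e.map_eq_zero_iff

variable {G J : Type} [Group G] (s : Fin 3 → G) (a : J → Fin 3 → ℕ) (N : ℕ)

/-- The homology of the coinvariants of the integral `latticeDiff`. -/
abbrev LatticeHomology (n : ℕ) : Type :=
  SeqHomology (M := fun n => LatticeCell J n →₀ ℤ) (coinvDiff (latticeDiff (R := ℤ) s a N)) n

/-- In odd degrees from three on, every chain is a cycle and the boundaries are the multiples
of `N`. -/
noncomputable def latticeHomologyOddEquiv {n : ℕ} (hn : Even n) :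
    LatticeHomology s a N (n + 3) ≃ₗ[ℤ] (Fin 3 → ZMod N) :=
  have h_cycle (x : Fin 3 →₀ ℤ) : x ∈ seqCycles (M := fun n => LatticeCell J n →₀ ℤ)
      (coinvDiff (latticeDiff s a N)) (n + 3) :=
    LinearMap.congr_fun (coinvDiff_latticeDiff_add_two_of_even s a N hn) x
  mapMkQEquivOfSurjective _ _ (reduceMod (Fin 3) N ∘ₗ Submodule.subtype _)
    ((reduceMod_surjective (Fin 3) N).comp fun x => ⟨⟨x, h_cycle x⟩, rfl⟩) fun z => by
      rw [coinvDiff_latticeDiff_add_three, if_pos hn]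
      exact reduceMod_eq_zero_iff

theorem subsingleton_latticeHomology_of_even [NeZero N] {n : ℕ} (hn : Even n) :
    Subsingleton (LatticeHomology s a N (n + 4)) := by
  have h_cycles : seqCycles (M := fun n => LatticeCell J n →₀ ℤ)
      (coinvDiff (latticeDiff s a N)) (n + 4) = ⊥ := by
    refine (Submodule.eq_bot_iff _).2 fun (x : Fin 3 →₀ ℤ) hx => ?_
    have h_smul : (N : ℤ) • x = 0 := by
      rw [seqCycles, LinearMap.mem_ker, coinvDiff_latticeDiff_add_three, if_pos hn] at hx
      exact hx
    exact (smul_eq_zero.1 h_smul).resolve_left (Nat.cast_ne_zero.2 (NeZero.ne N))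
  rw [LatticeHomology, SeqHomology, h_cycles, Submodule.map_bot]
  infer_instance

end HomologyComputation

section FirstHomology

variable {G J : Type} [Group G] (s : Fin 3 → G) (a : J → Fin 3 → ℕ) (N : ℕ)

theorem coinvDiff_latticeDiff_zero_eq_zero_iff {x : Fin 3 ⊕ Fin 3 →₀ ℤ} :
    coinvDiff (latticeDiff s a N) 0 x = 0 ↔ ∀ k, x (.inl k) = x (.inl 0) := by
  have h_apply (k : Fin 3) : (coinvDiff (latticeDiff s a N) 0 x : Fin 3 →₀ ℤ) (k + 1) = 0 ↔
      x (.inl k) = x (.inl (k + 1)) := by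
    rw [coinvDiff_latticeDiff_zero, sub_eq_zero]
  constructor
  · intro h k
    have h_succ k := (h_apply k).1 (DFunLike.congr_fun h (k + 1 : Fin 3))
    match k with
    | 0 => rfl
    | 1 => exact (h_succ 0).symm
    | 2 => exact h_succ 2
  · intro h
    refine Finsupp.ext ((add_right_surjective (1 : Fin 3)).forall.2 fun k => (h_apply k).2 ?_)
    rw [h k, h (k + 1)]

/-- The exponents of the triangle relations modulo `N`. -/
def relationMatrix (a : J → Fin 3 → ℕ) (N : ℕ) : Matrix J (Fin 3) (ZMod N) :=
  Matrix.of fun j k => (a j k : ZMod N)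

variable [Fintype J]

theorem reduceMod_inr_coinvDiff_latticeDiff_one (y : J ⊕ Fin 3 →₀ ℤ) (k : Fin 3) :
    reduceMod (Fin 3 ⊕ Fin 3) N (coinvDiff (latticeDiff s a N) 1 y) (.inr k) =
      (relationMatrix a N).vecMulLinear (fun j => (y (.inl j) : ZMod N)) k := by
  rw [reduceMod_apply, coinvDiff_latticeDiff_one_inr]
  simp [relationMatrix, Matrix.vecMul, dotProduct]

variable {a}

theorem exists_coinvDiff_latticeDiff_one_eq {j₀ : J} (hj₀ : ∀ k, a j₀ k = 0)
    {x : Fin 3 ⊕ Fin 3 →₀ ℤ} (hx : ∀ k, x (.inl k) = x (.inl 0)) {v : J → ZMod N}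
    (hv : ∀ k, (relationMatrix a N).vecMulLinear v k = x (.inr k)) :
    ∃ y, coinvDiff (latticeDiff s a N) 1 y = x := by
  classical
  choose u hu using fun j => ZMod.intCast_surjective (v j)
  let u' : J → ℤ := u + Pi.single j₀ (x (.inl 0) - ∑ j, u j)
  have h_sum : ∑ j, u' j = x (.inl 0) := by
    simp [u', Finset.sum_add_distrib]
  have h_mul k : ∑ j, u' j * a j k = ∑ j, u j * a j k := by
    refine Finset.sum_congr rfl fun j _ => ?_
    obtain rfl | hj := eq_or_ne j j₀
    · simp [hj₀]
    · simp [u', hj]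
  have h_dvd k : (N : ℤ) ∣ x (.inr k) - ∑ j, u' j * a j k := by
    rw [← ZMod.intCast_zmod_eq_zero_iff_dvd, h_mul, Int.cast_sub, ← hv, sub_eq_zero]
    simp [relationMatrix, Matrix.vecMul, dotProduct, hu]
  choose c hc using h_dvd
  refine ⟨Finsupp.equivFunOnFinite.symm (Sum.elim u' c), Finsupp.ext ?_⟩
  rintro (k | k)
  · rw [coinvDiff_latticeDiff_one_inl, hx]
    exact h_sum
  · rw [coinvDiff_latticeDiff_one_inr]
    change ∑ j, u' j * a j k + c k * N = x (.inr k)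
    linarith [hc k]

/-- The classes of the edges vanish, and those of the generators of the vertex stabilizers are
subject to the relations given by the triangles. -/
noncomputable def latticeHomologyOneEquiv {j₀ : J} (hj₀ : ∀ k, a j₀ k = 0) :
    LatticeHomology s a N 1 ≃ₗ[ℤ]
      (Fin 3 → ZMod N) ⧸ LinearMap.range (relationMatrix a N).vecMulLinear :=
  let proj := (LinearMap.range (relationMatrix a N).vecMulLinear).mkQ.restrictScalars ℤ
  let stab := LinearMap.funLeft ℤ (ZMod N) (Sum.inr : Fin 3 → Fin 3 ⊕ Fin 3) ∘ₗ
    reduceMod (Fin 3 ⊕ Fin 3) N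
  mapMkQEquivOfSurjective _ _ (proj ∘ₗ stab ∘ₗ Submodule.subtype _)
    (fun v => by
      obtain ⟨v, rfl⟩ := Submodule.mkQ_surjective _ v
      choose c hc using fun k => ZMod.intCast_surjective (v k)
      refine ⟨⟨Finsupp.equivFunOnFinite.symm (Sum.elim 0 c), ?_⟩, congrArg proj (funext hc)⟩
      exact (coinvDiff_latticeDiff_zero_eq_zero_iff s a N).2 fun k => rfl)
    fun z => by
      refine (Submodule.Quotient.mk_eq_zero _).trans ⟨?_, ?_⟩
      · rintro ⟨v, hv⟩
        exact exists_coinvDiff_latticeDiff_one_eq s N hj₀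
          ((coinvDiff_latticeDiff_zero_eq_zero_iff s a N).1 z.2) (congrFun hv)
      · rintro ⟨y, hy⟩
        refine ⟨fun j => (y (.inl j) : ZMod N), funext fun k => ?_⟩
        rw [← reduceMod_inr_coinvDiff_latticeDiff_one s, hy]
        rfl

end FirstHomology

section SecondHomology

variable {G J : Type} [Group G] (s : Fin 3 → G) (a : J → Fin 3 → ℕ) (N : ℕ)

/-- The two-cycle formed by `N` times the difference of the triangles of index `j` and `j₀`. -/
noncomputable def triangleCycle (j₀ j : J) : J ⊕ Fin 3 →₀ ℤ :=
  Finsupp.single (.inl j) (N : ℤ) - Finsupp.single (.inl j₀) (N : ℤ) -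
    ∑ k, Finsupp.single (.inr k) ((a j k : ℤ) - a j₀ k)

theorem triangleCycle_inl [DecidableEq J] {j₀ j' : J} (hj' : j' ≠ j₀) (j : J) :
    triangleCycle a N j₀ j (.inl j') = if j = j' then (N : ℤ) else 0 := by
  simp [triangleCycle, Finsupp.single_apply, hj'.symm]

theorem coinvDiff_latticeDiff_one_eq_zero_iff [Fintype J] {x : J ⊕ Fin 3 →₀ ℤ} :
    coinvDiff (latticeDiff s a N) 1 x = 0 ↔
      ∑ j, x (.inl j) = 0 ∧ ∀ k, ∑ j, x (.inl j) * a j k + x (.inr k) * N = 0 := by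
  have h_inl := coinvDiff_latticeDiff_one_inl s a N x
  have h_inr := coinvDiff_latticeDiff_one_inr s a N x
  refine Finsupp.ext_iff.trans (Sum.forall.trans (and_congr ?_ (forall_congr' fun k => ?_)))
  · exact ⟨fun h => (h_inl 0).symm.trans (h 0), fun h k => (h_inl k).trans h⟩
  · exact Eq.congr_left (h_inr k)

variable {s a N} [Finite J]

theorem eq_zero_of_coinvDiff_latticeDiff_one [NeZero N] {j₀ : J} {x : J ⊕ Fin 3 →₀ ℤ}
    (hx : coinvDiff (latticeDiff s a N) 1 x = 0) (h : ∀ j ≠ j₀, x (.inl j) = 0) : x = 0 := by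
  cases nonempty_fintype J
  obtain ⟨h_sum, h_stab⟩ := (coinvDiff_latticeDiff_one_eq_zero_iff s a N).1 hx
  rw [Fintype.sum_eq_single j₀ h] at h_sum
  have h_inl j : x (.inl j) = 0 := by
    obtain rfl | hj := eq_or_ne j j₀
    exacts [h_sum, h j hj]
  ext (j | k)
  · exact h_inl j
  · simpa [h_inl, NeZero.ne N] using h_stab k

variable (a N)

theorem coinvDiff_triangleCycle (j₀ j : J) :
    coinvDiff (latticeDiff s a N) 1 (triangleCycle a N j₀ j) = 0 := by
  classical
  cases nonempty_fintype J
  refine (coinvDiff_latticeDiff_one_eq_zero_iff s a N).2 ⟨?_, fun k => ?_⟩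
  · simp [triangleCycle, Finsupp.single_apply]
  · have h_sum : ∑ j', triangleCycle a N j₀ j (.inl j') * (a j' k : ℤ) =
        N * a j k - N * a j₀ k := by
      simp [triangleCycle, Finsupp.single_apply, sub_mul]
    have h_inr : triangleCycle a N j₀ j (.inr k) = -((a j k : ℤ) - a j₀ k) := by
      simp [triangleCycle, Finsupp.single_apply]
    rw [h_sum, h_inr]
    ring

variable [NeZero N]

/-- A two-cycle is determined by its coefficients on the triangles other than `j₀`, and the cycles
`triangleCycle` span a subgroup of full rank. -/
theorem nonempty_latticeHomologyTwoEquiv (j₀ : J) :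
    Nonempty (LatticeHomology s a N 2 ≃ₗ[ℤ] ({j : J // j ≠ j₀} → ℤ)) := by
  classical
  cases nonempty_fintype J
  let Z := LinearMap.ker (coinvDiff (latticeDiff (R := ℤ) s a N) 1)
  let coords : (J ⊕ Fin 3 →₀ ℤ) →ₗ[ℤ] ({j : J // j ≠ j₀} → ℤ) :=
    LinearMap.pi fun j => Finsupp.lapply (.inl j.1)
  let cycle : ({j : J // j ≠ j₀} → ℤ) →ₗ[ℤ] Z :=
    Fintype.linearCombination ℤ fun j =>
      ⟨triangleCycle a N j₀ j, coinvDiff_triangleCycle a N j₀ j⟩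
  have coords_cycle n : coords (cycle n) = (N : ℤ) • n := by
    ext j
    simp [coords, cycle, Fintype.linearCombination_apply, triangleCycle_inl a N j.2,
      Subtype.coe_inj, mul_comm (n j)]
  have coords_injective : Function.Injective (coords ∘ₗ Z.subtype) :=
    (injective_iff_map_eq_zero _).2 fun z hz => Subtype.ext <|
      eq_zero_of_coinvDiff_latticeDiff_one z.2 fun j hj => congrFun hz ⟨j, hj⟩
  have cycle_injective : Function.Injective cycle :=
    (injective_iff_map_eq_zero _).2 fun n hn => by
      have h := coords_cycle n
      rw [hn] at h
      exact (smul_eq_zero.1 h.symm).resolve_left (Nat.cast_ne_zero.2 (NeZero.ne N))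
  obtain ⟨e⟩ := nonempty_linearEquiv_of_injective coords_injective cycle_injective
  exact ⟨mapMkQEquivOfSurjective _ _ e.toLinearMap e.surjective fun z => by
    rw [coinvDiff_latticeDiff_two, LinearMap.range_zero, Submodule.mem_bot]
    exact e.map_eq_zero_iff.trans Subtype.ext_iff⟩

end SecondHomology

section SingerHomology

variable {q : ℕ} {δ : Fin 3 → Fin (q + 1) → ZMod (q ^ 2 + q + 1)}

theorem ker_mulVecLin_relationMatrix_exponents (h0 : ∀ i, δ i 0 = 0) :
    LinearMap.ker (relationMatrix (exponents δ) (q ^ 2 + q + 1)).mulVecLin =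
      LinearMap.ker (diffMap q δ) := by
  have h_zero (x : Fin 3 → ZMod (q ^ 2 + q + 1)) :
      (relationMatrix (exponents δ) (q ^ 2 + q + 1)).mulVec x 0 = 0 := by
    simp [relationMatrix, Matrix.mulVec, dotProduct, h0]
  have h_succ (x : Fin 3 → ZMod (q ^ 2 + q + 1)) (j : Fin q) :
      (relationMatrix (exponents δ) (q ^ 2 + q + 1)).mulVec x j.succ = diffMap q δ x j := by
    simp [relationMatrix, diffMap, Matrix.mulVec, dotProduct]
  ext x
  simp only [LinearMap.mem_ker, Matrix.mulVecLin_apply, funext_iff, Pi.zero_apply,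
    Fin.forall_fin_succ, h_zero, h_succ, true_and]

variable (hq : 0 < q) (h0 : ∀ i, δ i 0 = 0)
  (hpds : ∀ i, IsPlanarDifferenceSet q (Set.range (δ i)))
include hq h0 hpds

/-- The homology of the lattice computed by the free resolution `latticeDiff`. -/
noncomputable def singerHomologyEquiv (n : ℕ) :
    barHomology ℤ (SingerLattice q δ) n ≃ₗ[ℤ]
      LatticeHomology (generator δ) (exponents δ) (q ^ 2 + q + 1) n :=
  (isFreeResolution_singerLattice ℤ hq h0 hpds).barHomologyEquiv n

theorem nonempty_singerHomologyOneEquiv :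
    Nonempty (barHomology ℤ (SingerLattice q δ) 1 ≃+ LinearMap.ker (diffMap q δ)) := by
  have h_zero k : exponents δ 0 k = 0 := by rw [exponents, h0, ZMod.val_zero]
  obtain ⟨e⟩ := nonempty_quotient_range_vecMulLinear_equiv_ker
    (relationMatrix (exponents δ) (q ^ 2 + q + 1))
  exact ⟨((singerHomologyEquiv hq h0 hpds 1 ≪≫ₗ
    latticeHomologyOneEquiv (generator δ) _ h_zero).toAddEquiv.trans e.toAddEquiv).trans
    (LinearEquiv.ofEq _ _ (ker_mulVecLin_relationMatrix_exponents h0)).toAddEquiv⟩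

theorem nonempty_singerHomologyTwoEquiv :
    Nonempty (barHomology ℤ (SingerLattice q δ) 2 ≃+ (Fin q → ℤ)) := by
  obtain ⟨e⟩ := nonempty_latticeHomologyTwoEquiv (s := generator δ) (exponents δ)
    (q ^ 2 + q + 1) 0
  exact ⟨(singerHomologyEquiv hq h0 hpds 2 ≪≫ₗ e ≪≫ₗ
    LinearEquiv.funCongrLeft ℤ ℤ (finSuccAboveEquiv 0)).toAddEquiv⟩

end SingerHomology

theorem statement6_general (q : ℕ) (hq : 0 < q)
    (δ : Fin 3 → Fin (q + 1) → ZMod (q ^ 2 + q + 1)) (h0 : ∀ i, δ i 0 = 0)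
    (hpds : ∀ i, IsPlanarDifferenceSet q (Set.range (δ i))) :
    Nonempty (barHomology ℤ (SingerLattice q δ) 0 ≃+ ℤ) ∧
    Nonempty (barHomology ℤ (SingerLattice q δ) 1 ≃+ LinearMap.ker (diffMap q δ)) ∧
    Nonempty (barHomology ℤ (SingerLattice q δ) 2 ≃+ (Fin q → ℤ)) ∧
    (∀ j : ℕ, 3 ≤ j → Odd j →
      Nonempty (barHomology ℤ (SingerLattice q δ) j ≃+ (Fin 3 → ZMod (q ^ 2 + q + 1)))) ∧
    (∀ j : ℕ, 4 ≤ j → Even j → Subsingleton (barHomology ℤ (SingerLattice q δ) j)) := by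
  refine ⟨⟨(barHomologyZeroEquiv ℤ (SingerLattice q δ)).toAddEquiv⟩,
    nonempty_singerHomologyOneEquiv hq h0 hpds, nonempty_singerHomologyTwoEquiv hq h0 hpds,
    fun j hj h_odd => ?_, fun j hj h_even => ?_⟩
  · obtain ⟨n, rfl⟩ := Nat.exists_eq_add_of_le' hj
    have hn : Even n := by grind
    exact ⟨(singerHomologyEquiv hq h0 hpds (n + 3) ≪≫ₗ
      latticeHomologyOddEquiv (generator δ) (exponents δ) _ hn).toAddEquiv⟩
  · obtain ⟨n, rfl⟩ := Nat.exists_eq_add_of_le' hj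
    have hn : Even n := by grind
    have := subsingleton_latticeHomology_of_even (generator δ) (exponents δ) (q ^ 2 + q + 1) hn
    exact (singerHomologyEquiv hq h0 hpds (n + 4)).toEquiv.subsingleton

/-- Let `q ≥ 2` be a prime power, `N = q² + q + 1`, and let
`δ₁, δ₂, δ₃ : {0, …, q} → ZMod N` be injections with `δᵢ(0) = 0` whose images are planar
difference sets of order `q`, and let `Γ` be the panel-regular lattice presented by
`⟨σ₁, σ₂, σ₃ ∣ σᵢ^N = 1, σ₁^{δ₁(j)} σ₂^{δ₂(j)} σ₃^{δ₃(j)} = 1 for all j⟩`.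
Then the integral group homology of `Γ` is:  `H₀ ≅ ℤ`, `H₁ ≅ ker 𝒟`, `H₂ ≅ ℤ^q`,
`H_j ≅ (ZMod N)³` for odd `j ≥ 3`, and `H_j = 0` for even `j ≥ 4`. -/
theorem statement6 (q : ℕ) (hq : IsPrimePow q)
    (δ : Fin 3 → Fin (q + 1) → ZMod (q ^ 2 + q + 1))
    (hinj : ∀ i, Function.Injective (δ i))
    (h0 : ∀ i, δ i 0 = 0)
    (hpds : ∀ i, IsPlanarDifferenceSet q (Set.range (δ i))) :
    Nonempty (barHomology ℤ (SingerLattice q δ) 0 ≃+ ℤ) ∧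
    Nonempty (barHomology ℤ (SingerLattice q δ) 1 ≃+ LinearMap.ker (diffMap q δ)) ∧
    Nonempty (barHomology ℤ (SingerLattice q δ) 2 ≃+ (Fin q → ℤ)) ∧
    (∀ j : ℕ, 3 ≤ j → Odd j →
      Nonempty (barHomology ℤ (SingerLattice q δ) j ≃+ (Fin 3 → ZMod (q ^ 2 + q + 1)))) ∧
    (∀ j : ℕ, 4 ≤ j → Even j → Subsingleton (barHomology ℤ (SingerLattice q δ) j)) :=
  statement6_general q hq.pos δ h0 hpds

end Stmt6
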